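/- arXiv:1810.03555 — 4 statements merged into one kernel-verified Lean document; each statement's English description precedes it below -/
import Mathlib

section
/- Let K ⊆ ℝ² be a compact convex set with nonempty interior that is centrally symmetric (K = −K) and satisfies K + ℤ² = ℝ². Then K contains a spacefiller with respect to ℤ², i.e., there exists a convex set L ⊆ K which is either a parallelogram or a centrally symmetric hexagon such that L + ℤ² = ℝ² and for all distinct u, v ∈ ℤ² the interiors of L + u and L + v are disjoint. -/
/-!
Write `y ≡ y'` for congruence modulo `ℤ²`. The proof finds three points of `K` that are pairwise
congruent and span a triangle of area `1/2`, and builds the tile from them and their negatives.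

*Three congruent points.* Perturb the gauge of `K` to the strictly convex function
`φ = gauge K + ε ‖·‖²`, and let `x` maximize the `φ`-distance to the lattice. The nearest lattice
points of `x` cannot be just one or two: the supporting lines of the sublevel set at these points
would leave a direction in which `x` moves away from all of them. Strict convexity also prevents
three nearest points from being collinear, so there are three non-collinear nearest lattice points
`a, b, c` (`exists_deep_point`). As `K + ℤ²` is the plane, `x - a`, `x - b`, `x - c` have gauge at
most `1 + O(ε)`, and compactness gives three such points in `K` itself (`exists_triple`).

*Area `1/2`.* A lattice triangle of larger area contains another lattice point, which can replace
a vertex so that the area drops; this terminates (`exists_isTri`).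

*The tile.* Let `y₀, y₁, y₂ ∈ K` be the resulting points. The oriented areas `cr y₁ y₂`, `cr y₂ y₀`,
`cr y₀ y₁` add up to `1`. If one of them, say `cr y₁ y₂`, is at least `1/2`, then the parallelogram
`± y₁, ± y₂` can be shrunk, keeping its side `y₁ - y₂`, to area `1`, and its translates fill the
plane in strips (`para_of_large`, `para_spacefiller`). Otherwise `± y₀, ± y₁, ± y₂` are the vertices
of a hexagon. Its translates cover the lattice triangle, hence the plane (`hexa_cover`), and every
nonzero lattice vector shifts it off one of the strips between two opposite edges (`hexa_sep`).
Both kinds of tile lie in `K` because `K` is convex and symmetric.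
-/

open Set Pointwise Real MeasureTheory

noncomputable section

abbrev E2 := EuclideanSpace ℝ (Fin 2)

def v2 (a b : ℝ) : E2 := (WithLp.equiv 2 (Fin 2 → ℝ)).symm ![a, b]

/-- The lattice `ℤ² ⊆ ℝ²`. -/
def latticeZ2 : Set E2 := {v | ∀ i, ∃ m : ℤ, v i = (m : ℝ)}

/-- `K` contains a lattice point of `ℤ²` in any position: every rotated and translated
copy `Q(K) + x` of `K` contains a point of `ℤ²`. -/
def CoversAnyPosition (K : Set E2) : Prop :=
  ∀ (Q : E2 ≃ₗᵢ[ℝ] E2) (x : E2), ∃ z ∈ (fun y => Q y + x) '' K, z ∈ latticeZ2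

/-- A parallelogram in `ℝ²`: `{v + s•u₁ + t•u₂ : s, t ∈ [0,1]}` for linearly
independent `u₁, u₂`. -/
def IsParallelogram (L : Set E2) : Prop :=
  ∃ (v u₁ u₂ : E2), LinearIndependent ℝ ![u₁, u₂] ∧
    L = {p | ∃ s t : ℝ, s ∈ Icc (0:ℝ) 1 ∧ t ∈ Icc (0:ℝ) 1 ∧ p = v + s • u₁ + t • u₂}

/-- A centrally symmetric hexagon in `ℝ²`: the convex hull of six points, opposite ones
symmetric with respect to the center `c`, all six being vertices (extreme points). -/
def IsCentSymHexagon (L : Set E2) : Prop :=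
  ∃ (c : E2) (p : Fin 6 → E2),
    (∀ i, p (i + 3) = (2 : ℝ) • c - p i) ∧
    L = convexHull ℝ (Set.range p) ∧
    ∀ i, p i ∈ Set.extremePoints ℝ L

/-- A spacefiller with respect to `ℤ²`: a parallelogram or centrally symmetric hexagon
whose `ℤ²`-translates cover `ℝ²` and have pairwise disjoint interiors. -/
def IsSpacefiller (L : Set E2) : Prop :=
  (IsParallelogram L ∨ IsCentSymHexagon L) ∧
  L + latticeZ2 = Set.univ ∧
  ∀ u ∈ latticeZ2, ∀ v ∈ latticeZ2, u ≠ v →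
    Disjoint (interior ((· + u) '' L)) (interior ((· + v) '' L))

/-! ### The lattice and the cross product -/

/-- The cross product (oriented area) `a₀ b₁ - a₁ b₀` of two plane vectors. -/
def cr (a b : E2) : ℝ := a 0 * b 1 - a 1 * b 0

lemma lat_zero : (0 : E2) ∈ latticeZ2 := fun _ => ⟨0, by simp⟩

lemma lat_add {a b : E2} (ha : a ∈ latticeZ2) (hb : b ∈ latticeZ2) : a + b ∈ latticeZ2 := by
  intro i
  obtain ⟨m, hm⟩ := ha i
  obtain ⟨n, hn⟩ := hb i
  exact ⟨m + n, by simp [hm, hn]⟩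

lemma lat_neg {a : E2} (ha : a ∈ latticeZ2) : -a ∈ latticeZ2 := by
  intro i
  obtain ⟨m, hm⟩ := ha i
  exact ⟨-m, by simp [hm]⟩

lemma lat_sub {a b : E2} (ha : a ∈ latticeZ2) (hb : b ∈ latticeZ2) : a - b ∈ latticeZ2 := by
  rw [sub_eq_add_neg]
  exact lat_add ha (lat_neg hb)

lemma lat_zsmul {a : E2} (ha : a ∈ latticeZ2) (n : ℤ) : (n : ℝ) • a ∈ latticeZ2 := by
  intro i
  obtain ⟨m, hm⟩ := ha i
  exact ⟨n * m, by simp [hm]⟩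

lemma lat_cr {a b : E2} (ha : a ∈ latticeZ2) (hb : b ∈ latticeZ2) :
    ∃ m : ℤ, cr a b = m := by
  obtain ⟨m, hm⟩ := ha 0
  obtain ⟨n, hn⟩ := ha 1
  obtain ⟨k, hk⟩ := hb 0
  obtain ⟨l, hl⟩ := hb 1
  exact ⟨m * l - n * k, by simp [cr, hm, hn, hk, hl]⟩

lemma e2_ext {a b : E2} (h0 : a 0 = b 0) (h1 : a 1 = b 1) : a = b := by
  ext i
  fin_cases i
  · exact h0
  · exact h1

lemma cr_add_left (a b c : E2) : cr (a + b) c = cr a c + cr b c := by simp [cr]; ring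
lemma cr_sub_left (a b c : E2) : cr (a - b) c = cr a c - cr b c := by simp [cr]; ring
lemma cr_smul_left (r : ℝ) (a c : E2) : cr (r • a) c = r * cr a c := by simp [cr]; ring
lemma cr_neg_left (a c : E2) : cr (-a) c = - cr a c := by simp [cr]; ring
lemma cr_add_right (a b c : E2) : cr c (a + b) = cr c a + cr c b := by simp [cr]; ring
lemma cr_sub_right (a b c : E2) : cr c (a - b) = cr c a - cr c b := by simp [cr]; ring
lemma cr_smul_right (r : ℝ) (a c : E2) : cr c (r • a) = r * cr c a := by simp [cr]; ring
lemma cr_neg_right (a c : E2) : cr c (-a) = - cr c a := by simp [cr]; ring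
lemma cr_self (a : E2) : cr a a = 0 := by simp [cr]; ring
lemma cr_swap (a b : E2) : cr a b = - cr b a := by simp [cr]; ring

/-- Cramer's rule. -/
lemma cramer (u v w : E2) : cr u v • w = cr w v • u + cr u w • v := by
  apply e2_ext <;> simp [cr] <;> ring

/-- Two functionals `cr · e`, `cr · f` with `e`, `f` independent separate points. -/
lemma eq_zero_of_cr {d e f : E2} (he : cr d e = 0) (hf : cr d f = 0) (h : cr e f ≠ 0) :
    d = 0 := by
  have := cramer e f d
  rw [hf, cr_swap e d, he] at this
  simpa [h] using this

lemma continuous_cr_left (e : E2) : Continuous fun z => cr z e := by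
  unfold cr; fun_prop

/-! ### Convex symmetric sets and separation of lattice translates -/

lemma comb_mem {K : Set E2} (hc : Convex ℝ K) (h0 : (0 : E2) ∈ K) {a b : E2} (ha : a ∈ K)
    (hb : b ∈ K) {s t : ℝ} (hs : 0 ≤ s) (ht : 0 ≤ t) (hst : s + t ≤ 1) :
    s • a + t • b ∈ K := by
  have := hc.sum_mem (t := Finset.univ) (w := ![s, t, 1 - s - t]) (z := ![a, b, 0])
    (by intro i _; fin_cases i <;> simp <;> linarith)
    (by simp [Fin.sum_univ_three])
    (by intro i _; fin_cases i <;> simp [ha, hb, h0])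
  simpa [Fin.sum_univ_three] using this

lemma comb_mem_abs {K : Set E2} (hc : Convex ℝ K) (hs : ∀ z ∈ K, -z ∈ K) {a b : E2} (ha : a ∈ K)
    (hb : b ∈ K) {s t : ℝ} (hst : |s| + |t| ≤ 1) :
    s • a + t • b ∈ K := by
  have h0 : (0 : E2) ∈ K := by
    have := hc ha (hs a ha) (a := 1/2) (b := 1/2) (by norm_num) (by norm_num) (by norm_num)
    simpa using this
  rcases le_total 0 s with h1 | h1 <;> rcases le_total 0 t with h2 | h2 <;>
    simp only [abs_of_nonneg, abs_of_nonpos, h1, h2] at hst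
  · exact comb_mem hc h0 ha hb h1 h2 hst
  · have := comb_mem hc h0 ha (hs b hb) h1 (neg_nonneg.2 h2) hst
    simpa using this
  · have := comb_mem hc h0 (hs a ha) hb (neg_nonneg.2 h1) h2 hst
    simpa using this
  · have := comb_mem hc h0 (hs a ha) (hs b hb) (neg_nonneg.2 h1) (neg_nonneg.2 h2) hst
    simpa using this

/-- `L` lies in a strip around the origin, bounded by two parallel lines, that the translation by
`w` moves off itself (up to the boundary). -/
def StripSep (L : Set E2) (w : E2) : Prop :=
  ∃ (e : E2) (h : ℝ), (∀ z ∈ L, |cr z e| ≤ h) ∧ 2 * h ≤ cr w e ∧ 0 < cr w e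

lemma StripSep.neg {L : Set E2} {w : E2} (h : StripSep L w) : StripSep L (-w) := by
  obtain ⟨e, h, h1, h2, h3⟩ := h
  refine ⟨-e, h, fun z hz => ?_, ?_, ?_⟩
  · rw [cr_neg_right, abs_neg]; exact h1 z hz
  · rw [cr_neg_right, cr_neg_left, neg_neg]; exact h2
  · rw [cr_neg_right, cr_neg_left, neg_neg]; exact h3

lemma strip_interior {L : Set E2} {e w u p : E2} {h : ℝ} (hL : ∀ z ∈ L, |cr z e| ≤ h)
    (hw : 0 < cr w e) (hp : p ∈ interior ((· + u) '' L)) : |cr (p - u) e| < h := by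
  have hcont : Filter.Tendsto (fun t : ℝ => p + t • w) (nhds 0) (nhds p) := by
    have : Continuous (fun t : ℝ => p + t • w) := by fun_prop
    simpa using this.tendsto 0
  have hev := hcont.eventually (isOpen_interior.mem_nhds hp)
  obtain ⟨ε, hε, hball⟩ := Metric.eventually_nhds_iff.1 hev
  have key : ∀ t : ℝ, |t| < ε → |cr (p - u) e + t * cr w e| ≤ h := by
    intro t ht
    obtain ⟨z, hz, hzp⟩ := interior_subset (hball (y := t) (by simpa [Real.dist_eq] using ht))
    have hz' : z = (p - u) + t • w := by
      simp only at hzp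
      rw [eq_sub_of_add_eq hzp]; abel
    have := hL z hz
    rwa [hz', cr_add_left, cr_smul_left] at this
  have k1 := key (ε / 2) (by rw [abs_of_pos] <;> linarith)
  have k2 := key (-(ε / 2)) (by rw [abs_neg, abs_of_pos] <;> linarith)
  rw [abs_le] at k1 k2
  have : 0 < ε / 2 * cr w e := by positivity
  rw [abs_lt]
  constructor <;> nlinarith

lemma disjoint_of_stripSep {L : Set E2} (h : ∀ w ∈ latticeZ2, w ≠ 0 → StripSep L w) :
    ∀ u ∈ latticeZ2, ∀ v ∈ latticeZ2, u ≠ v →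
      Disjoint (interior ((· + u) '' L)) (interior ((· + v) '' L)) := by
  intro u hu v hv huv
  obtain ⟨e, h, h1, h2, h3⟩ := h (u - v) (lat_sub hu hv) (sub_ne_zero.2 huv)
  rw [Set.disjoint_left]
  intro p hp hp'
  have a1 := abs_lt.1 (strip_interior h1 h3 hp)
  have a2 := abs_lt.1 (strip_interior h1 h3 hp')
  simp only [cr_sub_left] at *
  linarith

/-! ### The parallelogram tile -/

/-- If `y₁, y₂ ∈ K`, `y₁ - y₂` is a primitive lattice vector (completed to a basis by `w`) and
`cr y₁ y₂ = 1/2`, then the parallelogram with vertices `± y₁, ± y₂` is a spacefiller: its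
translates by `y₁ - y₂` form a strip, and the strips are stacked by `w`, possibly sheared as
in a brick wall. -/
lemma para_spacefiller {K : Set E2} (hc : Convex ℝ K) (hs : ∀ z ∈ K, -z ∈ K) {y₁ y₂ w : E2}
    (h1 : y₁ ∈ K) (h2 : y₂ ∈ K) (hl : y₁ - y₂ ∈ latticeZ2) (hy : cr y₁ y₂ = 1 / 2)
    (hw : w ∈ latticeZ2) (hlw : cr (y₁ - y₂) w = 1) :
    ∃ L : Set E2, L ⊆ K ∧ Convex ℝ L ∧ IsSpacefiller L := by
  have hy' : cr y₂ y₁ = -(1 / 2) := by rw [cr_swap, hy]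
  -- coordinates with respect to `u₁ = y₁ + y₂`, `u₂ = y₁ - y₂`
  have coord : ∀ z : E2, z = cr (y₁ - y₂) z • (y₁ + y₂) + cr z (y₁ + y₂) • (y₁ - y₂) := by
    intro z
    have := cramer (y₁ - y₂) (y₁ + y₂) z
    have h : cr (y₁ - y₂) (y₁ + y₂) = 1 := by
      simp only [cr_sub_left, cr_add_right, cr_self, hy, hy']; norm_num
    rw [h, one_smul] at this
    exact this.trans (add_comm _ _)
  set L : Set E2 := {p | ∃ s t : ℝ, s ∈ Icc (0:ℝ) 1 ∧ t ∈ Icc (0:ℝ) 1 ∧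
    p = -y₁ + s • (y₁ + y₂) + t • (y₁ - y₂)} with hL
  have hσ : ∀ z ∈ L, |cr z (y₁ - y₂)| ≤ 1 / 2 := by
    rintro z ⟨s, t, ⟨hs0, hs1⟩, ⟨ht0, ht1⟩, rfl⟩
    simp only [cr_add_left, cr_sub_left, cr_sub_right, cr_smul_left, cr_neg_left,
      cr_self, hy, hy']
    rw [abs_le]; constructor <;> linarith
  have hτ : ∀ z ∈ L, |cr z (y₁ + y₂)| ≤ 1 / 2 := by
    rintro z ⟨s, t, ⟨hs0, hs1⟩, ⟨ht0, ht1⟩, rfl⟩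
    simp only [cr_add_left, cr_sub_left, cr_add_right, cr_smul_left, cr_neg_left,
      cr_self, hy, hy']
    rw [abs_le]; constructor <;> linarith
  refine ⟨L, ?_, ?_, Or.inl ⟨-y₁, y₁ + y₂, y₁ - y₂, ?_, rfl⟩, ?_, ?_⟩
  · rintro z ⟨s, t, ⟨hs0, hs1⟩, ⟨ht0, ht1⟩, rfl⟩
    have : -y₁ + s • (y₁ + y₂) + t • (y₁ - y₂) = (s + t - 1) • y₁ + (s - t) • y₂ := by module
    rw [this]
    apply comb_mem_abs hc hs h1 h2
    rcases abs_cases (s + t - 1) with h | h <;> rcases abs_cases (s - t) with h' | h' <;> linarith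
  · rintro a ⟨s, t, ⟨hs0, hs1⟩, ⟨ht0, ht1⟩, rfl⟩ b ⟨s', t', ⟨hs0', hs1'⟩, ⟨ht0', ht1'⟩, rfl⟩
      p q hp hq hpq
    refine ⟨p * s + q * s', p * t + q * t', ⟨by positivity, by nlinarith⟩,
      ⟨by positivity, by nlinarith⟩, ?_⟩
    obtain rfl : q = 1 - p := by linarith
    module
  · rw [LinearIndependent.pair_iff]
    intro s t hst
    have e1 : cr (s • (y₁ + y₂) + t • (y₁ - y₂)) (y₁ - y₂) = 0 := by rw [hst]; simp [cr]
    have e2 : cr (s • (y₁ + y₂) + t • (y₁ - y₂)) (y₁ + y₂) = 0 := by rw [hst]; simp [cr]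
    simp only [cr_add_left, cr_sub_left, cr_sub_right, cr_add_right, cr_smul_left,
      cr_self, hy, hy'] at e1 e2
    constructor <;> linarith
  · rw [Set.eq_univ_iff_forall]
    intro z
    set i := ⌊cr (y₁ - y₂) z + 1 / 2⌋ with hi
    set z' := z - (i : ℝ) • w with hz'
    set j := ⌊cr z' (y₁ + y₂) + 1 / 2⌋ with hj
    refine Set.mem_add.2 ⟨z' - (j : ℝ) • (y₁ - y₂), ?_, (i : ℝ) • w + (j : ℝ) • (y₁ - y₂),
      lat_add (lat_zsmul hw i) (lat_zsmul hl j), by rw [hz']; abel⟩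
    have hσz : cr (y₁ - y₂) z' = cr (y₁ - y₂) z - i := by
      rw [hz', cr_sub_right, cr_smul_right, hlw, mul_one]
    have i1 := Int.floor_le (cr (y₁ - y₂) z + 1 / 2)
    have i2 := Int.lt_floor_add_one (cr (y₁ - y₂) z + 1 / 2)
    have j1 := Int.floor_le (cr z' (y₁ + y₂) + 1 / 2)
    have j2 := Int.lt_floor_add_one (cr z' (y₁ + y₂) + 1 / 2)
    rw [← hi] at i1 i2
    rw [← hj] at j1 j2
    refine ⟨cr (y₁ - y₂) z' + 1 / 2, cr z' (y₁ + y₂) - j + 1 / 2, ⟨by linarith, by linarith⟩,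
      ⟨by linarith, by linarith⟩, ?_⟩
    nth_rewrite 1 [coord z']
    module
  · apply disjoint_of_stripSep
    intro m hm hm0
    obtain ⟨a, ha⟩ := lat_cr hm hl
    obtain ⟨b, hb⟩ := lat_cr hm hw
    rcases lt_trichotomy a 0 with ha0 | ha0 | ha0
    · have : (a : ℝ) ≤ -1 := by exact_mod_cast (by omega : a ≤ -1)
      rw [← neg_neg m]
      apply StripSep.neg
      exact ⟨y₁ - y₂, 1 / 2, hσ, by rw [cr_neg_left, ha]; linarith, by
        rw [cr_neg_left, ha]; linarith⟩
    · -- here `m` is an integer multiple of `y₁ - y₂`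
      have hmz : m = cr m (y₁ + y₂) • (y₁ - y₂) := by
        have := coord m
        rw [cr_swap (y₁ - y₂) m, ha, ha0] at this
        simpa using this
      have hbm : cr m (y₁ + y₂) = b := by
        rw [← hb]; nth_rewrite 2 [hmz]; rw [cr_smul_left, hlw, mul_one]
      have hb0 : b ≠ 0 := by
        rintro rfl
        rw [hbm] at hmz
        exact hm0 (by simpa using hmz)
      rcases lt_or_gt_of_ne hb0 with hb1 | hb1
      · have : (b : ℝ) ≤ -1 := by exact_mod_cast (by omega : b ≤ -1)
        rw [← neg_neg m]
        apply StripSep.neg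
        exact ⟨y₁ + y₂, 1 / 2, hτ, by rw [cr_neg_left, hbm]; linarith, by
          rw [cr_neg_left, hbm]; linarith⟩
      · have : (1 : ℝ) ≤ b := by exact_mod_cast (by omega : 1 ≤ b)
        exact ⟨y₁ + y₂, 1 / 2, hτ, by rw [hbm]; linarith, by rw [hbm]; linarith⟩
    · have : (1 : ℝ) ≤ a := by exact_mod_cast (by omega : 1 ≤ a)
      exact ⟨y₁ - y₂, 1 / 2, hσ, by rw [ha]; linarith, by rw [ha]; linarith⟩

/-! ### The hexagon tile -/

/-- `y₀, y₁, y₂` are the vectors `x - a`, `x - b`, `x - c` from the vertices of a positively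
oriented lattice triangle `a, b, c` of area `1/2` to a point `x`. The numbers `cr y₁ y₂`,
`cr y₂ y₀`, `cr y₀ y₁` are the barycentric coordinates of `x` in that triangle. -/
def IsTri (y₀ y₁ y₂ : E2) : Prop :=
  y₀ - y₁ ∈ latticeZ2 ∧ y₀ - y₂ ∈ latticeZ2 ∧ cr y₁ y₂ + cr y₂ y₀ + cr y₀ y₁ = 1

lemma IsTri.rot {y₀ y₁ y₂ : E2} (h : IsTri y₀ y₁ y₂) : IsTri y₁ y₂ y₀ := by
  obtain ⟨h1, h2, h3⟩ := h
  refine ⟨?_, ?_, by linarith⟩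
  · have := lat_sub h2 h1
    simpa using this
  · have := lat_neg h1
    simpa using this

lemma bary_zero (y₀ y₁ y₂ : E2) : cr y₁ y₂ • y₀ + cr y₂ y₀ • y₁ + cr y₀ y₁ • y₂ = 0 := by
  apply e2_ext <;> simp [cr] <;> ring

/-- The hexagon with vertices `± y₀, ± y₁, ± y₂`. -/
def hexa (y₀ y₁ y₂ : E2) : Set E2 := convexHull ℝ {y₀, y₁, y₂, -y₀, -y₁, -y₂}

lemma hexa_rot (y₀ y₁ y₂ : E2) : hexa y₁ y₂ y₀ = hexa y₀ y₁ y₂ := by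
  unfold hexa
  congr 1
  ext z
  simp only [Set.mem_insert_iff, Set.mem_singleton_iff]
  tauto

lemma hexa_neg (y₀ y₁ y₂ : E2) : hexa (-y₀) (-y₁) (-y₂) = hexa y₀ y₁ y₂ := by
  unfold hexa
  congr 1
  ext z
  simp only [Set.mem_insert_iff, Set.mem_singleton_iff, neg_neg]
  tauto

lemma hexa_sub {K : Set E2} (hc : Convex ℝ K) (hs : ∀ z ∈ K, -z ∈ K) {y₀ y₁ y₂ : E2}
    (h0 : y₀ ∈ K) (h1 : y₁ ∈ K) (h2 : y₂ ∈ K) : hexa y₀ y₁ y₂ ⊆ K := by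
  apply convexHull_min _ hc
  intro z hz
  simp only [Set.mem_insert_iff, Set.mem_singleton_iff] at hz
  rcases hz with rfl | rfl | rfl | rfl | rfl | rfl <;> first | assumption | (apply hs; assumption)

lemma hexa_mem (y₀ y₁ y₂ : E2) : y₀ ∈ hexa y₀ y₁ y₂ := subset_convexHull ℝ _ (by simp)

lemma hexa_symm {y₀ y₁ y₂ : E2} : ∀ z ∈ hexa y₀ y₁ y₂, -z ∈ hexa y₀ y₁ y₂ := by
  intro z hz
  have hc : Convex ℝ (-(hexa y₀ y₁ y₂)) := (convex_convexHull ℝ _).neg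
  have : hexa y₀ y₁ y₂ ⊆ -(hexa y₀ y₁ y₂) := by
    apply convexHull_min _ hc
    intro z hz
    rw [Set.mem_neg]
    apply subset_convexHull
    simp only [Set.mem_insert_iff, Set.mem_singleton_iff] at hz
    rcases hz with rfl | rfl | rfl | rfl | rfl | rfl <;> simp
  exact this hz

lemma hexa_bound {y₀ y₁ y₂ e : E2} {h : ℝ} (h0 : |cr y₀ e| ≤ h) (h1 : |cr y₁ e| ≤ h)
    (h2 : |cr y₂ e| ≤ h) : ∀ z ∈ hexa y₀ y₁ y₂, |cr z e| ≤ h := by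
  have hc : Convex ℝ {z : E2 | |cr z e| ≤ h} := by
    intro a ha b hb p q hp hq hpq
    simp only [Set.mem_ofPred_eq, cr_add_left, cr_smul_left, abs_le] at *
    constructor <;> nlinarith
  refine hexa_sub hc ?_ h0 h1 h2
  intro z hz
  simpa only [Set.mem_ofPred_eq, cr_neg_left, abs_neg] using hz

/-- The supporting strip of the edge from `-y₁` to `y₀`. -/
lemma hexa_edge₁ {y₀ y₁ y₂ : E2} (ht : IsTri y₀ y₁ y₂) (h0 : cr y₁ y₂ < 1 / 2)
    (h1 : cr y₂ y₀ < 1 / 2) :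
    ∀ z ∈ hexa y₀ y₁ y₂, |cr z (y₀ + y₁)| ≤ cr y₀ y₁ := by
  obtain ⟨-, -, h3⟩ := ht
  apply hexa_bound <;> simp only [cr_add_right, cr_self, cr_swap y₁ y₀, cr_swap y₂ y₁] <;>
    rw [abs_le] <;> constructor <;> linarith

/-- The supporting strip of the edge from `y₀` to `-y₂`. -/
lemma hexa_edge₂ {y₀ y₁ y₂ : E2} (ht : IsTri y₀ y₁ y₂) (h0 : cr y₁ y₂ < 1 / 2)
    (h2 : cr y₀ y₁ < 1 / 2) :
    ∀ z ∈ hexa y₀ y₁ y₂, |cr z (y₂ + y₀)| ≤ cr y₂ y₀ := by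
  have := hexa_edge₁ ht.rot.rot h2 h0
  rwa [hexa_rot, hexa_rot] at this

/-- The vertex `y₀` is extreme, being the only point of the hexagon on both supporting lines
through the edges that meet there. -/
lemma hexa_extreme {y₀ y₁ y₂ : E2} (ht : IsTri y₀ y₁ y₂) (h0 : cr y₁ y₂ < 1 / 2)
    (h1 : cr y₂ y₀ < 1 / 2) (h2 : cr y₀ y₁ < 1 / 2) :
    y₀ ∈ Set.extremePoints ℝ (hexa y₀ y₁ y₂) := by
  have b1 := hexa_edge₁ ht h0 h1
  have b2 := hexa_edge₂ ht h0 h2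
  refine mem_extremePoints_iff_left.2 ⟨hexa_mem _ _ _, ?_⟩
  rintro a ha b hb ⟨s, t, hs, ht', hst, hab⟩
  have e1 := congrArg (fun z => cr z (y₀ + y₁)) hab
  have e2 := congrArg (fun z => cr z (y₂ + y₀)) hab
  simp only [cr_add_left, cr_smul_left] at e1 e2
  have a1 := abs_le.1 (b1 a ha)
  have a2 := abs_le.1 (b2 a ha)
  have c1 := abs_le.1 (b1 b hb)
  have c2 := abs_le.1 (b2 b hb)
  obtain ⟨-, -, h3⟩ := ht
  have y1 : cr y₀ (y₀ + y₁) = cr y₀ y₁ := by rw [cr_add_right, cr_self, zero_add]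
  have y2 : cr y₀ (y₂ + y₀) = - cr y₂ y₀ := by
    rw [cr_add_right, cr_self, add_zero, cr_swap]
  obtain rfl : t = 1 - s := by linarith
  have k1 : cr a (y₀ + y₁) = cr y₀ y₁ := by
    rw [y1] at e1
    nlinarith [mul_nonneg hs.le (sub_nonneg.2 a1.2), mul_nonneg ht'.le (sub_nonneg.2 c1.2)]
  have k2 : cr a (y₂ + y₀) = - cr y₂ y₀ := by
    rw [y2] at e2
    nlinarith [mul_nonneg hs.le (sub_nonneg.2 a2.1), mul_nonneg ht'.le (sub_nonneg.2 c2.1)]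
  have := eq_zero_of_cr (d := a - y₀) (e := y₀ + y₁) (f := y₂ + y₀)
    (by rw [cr_sub_left, k1, y1, sub_self]) (by rw [cr_sub_left, k2, y2, sub_self])
    (by
      simp only [cr_add_left, cr_add_right, cr_self, cr_swap y₁ y₀, cr_swap y₀ y₂]
      intro h
      linarith)
  exact sub_eq_zero.1 this

lemma IsTri.neg {y₀ y₁ y₂ : E2} (h : IsTri y₀ y₁ y₂) : IsTri (-y₀) (-y₁) (-y₂) := by
  obtain ⟨h1, h2, h3⟩ := h
  refine ⟨?_, ?_, by simpa only [cr_neg_left, cr_neg_right, neg_neg] using h3⟩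
  · have := lat_neg h1
    rwa [neg_sub, ← neg_sub_neg] at this
  · have := lat_neg h2
    rwa [neg_sub, ← neg_sub_neg] at this

/-- Lattice vectors in the cone between the two neighbours `y₀ - y₁` and `y₀ - y₂` (the latter ray
excluded) are separated by the edge strip belonging to `y₀ - y₁`. -/
lemma hexa_cone {y₀ y₁ y₂ : E2} (ht : IsTri y₀ y₁ y₂) (h0 : cr y₁ y₂ < 1 / 2)
    (h1 : cr y₂ y₀ < 1 / 2) (h2 : cr y₀ y₁ < 1 / 2) {i j : ℤ} (hi : 1 ≤ i) (hj : 0 ≤ j) :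
    StripSep (hexa y₀ y₁ y₂) ((i : ℝ) • (y₀ - y₁) + (j : ℝ) • (y₀ - y₂)) := by
  have hi' : (1 : ℝ) ≤ i := by exact_mod_cast hi
  have hj' : (0 : ℝ) ≤ j := by exact_mod_cast hj
  have hb := hexa_edge₁ ht h0 h1
  obtain ⟨-, -, h3⟩ := ht
  have hval : cr ((i : ℝ) • (y₀ - y₁) + (j : ℝ) • (y₀ - y₂)) (y₀ + y₁) =
      2 * cr y₀ y₁ * i + (1 - 2 * cr y₂ y₀) * j := by
    simp only [cr_add_left, cr_smul_left, cr_sub_left, cr_add_right, cr_self, cr_swap y₁ y₀,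
      cr_swap y₂ y₁]
    linear_combination (j : ℝ) * h3
  have hp : 0 < cr y₀ y₁ := by linarith
  refine ⟨y₀ + y₁, cr y₀ y₁, hb, ?_, ?_⟩ <;> rw [hval] <;> nlinarith

/-- The six cones of `hexa_cone`, for the three rotations of the triple and their negatives, contain
all nonzero lattice vectors. -/
lemma hexa_sep {y₀ y₁ y₂ : E2} (ht : IsTri y₀ y₁ y₂) (h0 : cr y₁ y₂ < 1 / 2)
    (h1 : cr y₂ y₀ < 1 / 2) (h2 : cr y₀ y₁ < 1 / 2) {w : E2} (hw : w ∈ latticeZ2) (hw0 : w ≠ 0) :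
    StripSep (hexa y₀ y₁ y₂) w := by
  obtain ⟨i, hi⟩ := lat_cr hw ht.2.1
  obtain ⟨j, hj⟩ := lat_cr ht.1 hw
  have hdet : cr (y₀ - y₁) (y₀ - y₂) = 1 := by
    simp only [cr_sub_left, cr_sub_right, cr_self, cr_swap y₁ y₀, cr_swap y₀ y₂]
    linarith [ht.2.2]
  have hwe := cramer (y₀ - y₁) (y₀ - y₂) w
  rw [hdet, one_smul, hi, hj] at hwe
  have cone1 : ∀ i j : ℤ, 1 ≤ i → 0 ≤ j →
      StripSep (hexa y₀ y₁ y₂) ((i : ℝ) • (y₀ - y₁) + (j : ℝ) • (y₀ - y₂)) :=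
    fun i j hi hj => hexa_cone ht h0 h1 h2 hi hj
  have cone2 : ∀ i j : ℤ, 1 ≤ j → i ≤ -j →
      StripSep (hexa y₀ y₁ y₂) ((i : ℝ) • (y₀ - y₁) + (j : ℝ) • (y₀ - y₂)) := by
    intro i j hi hj
    have := hexa_cone ht.rot h1 h2 h0 (i := j) (j := -i - j) hi (by omega)
    rw [hexa_rot] at this
    convert this using 1
    push_cast
    module
  have cone3 : ∀ i j : ℤ, 0 ≤ i → j ≤ -1 - i →
      StripSep (hexa y₀ y₁ y₂) ((i : ℝ) • (y₀ - y₁) + (j : ℝ) • (y₀ - y₂)) := by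
    intro i j hi hj
    have := hexa_cone ht.rot.rot h2 h0 h1 (i := -i - j) (j := i) (by omega) hi
    rw [hexa_rot, hexa_rot] at this
    convert this using 1
    push_cast
    module
  have hneg : ∀ i j : ℤ,
      StripSep (hexa y₀ y₁ y₂) (((-i : ℤ) : ℝ) • (y₀ - y₁) + ((-j : ℤ) : ℝ) • (y₀ - y₂)) →
      StripSep (hexa y₀ y₁ y₂) ((i : ℝ) • (y₀ - y₁) + (j : ℝ) • (y₀ - y₂)) := by
    intro i j h
    convert h.neg using 1
    push_cast
    module
  have hij : ¬ (i = 0 ∧ j = 0) := by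
    rintro ⟨rfl, rfl⟩
    exact hw0 (by simpa using hwe)
  rw [hwe]
  have hcases : (1 ≤ i ∧ 0 ≤ j) ∨ (1 ≤ j ∧ i ≤ -j) ∨ (0 ≤ i ∧ j ≤ -1 - i) ∨
      (1 ≤ -i ∧ 0 ≤ -j) ∨ (1 ≤ -j ∧ -i ≤ -(-j)) ∨ (0 ≤ -i ∧ -j ≤ -1 - (-i)) := by omega
  rcases hcases with h | h | h | h | h | h
  · exact cone1 i j h.1 h.2
  · exact cone2 i j h.1 h.2
  · exact cone3 i j h.1 h.2
  · exact hneg i j (cone1 _ _ h.1 h.2)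
  · exact hneg i j (cone2 _ _ h.1 h.2)
  · exact hneg i j (cone3 _ _ h.1 h.2)

/-- The point with barycentric coordinates `m₀, m₁, m₂` in the triangle of `IsTri` lies in a lattice
translate of the hexagon. Here the third coordinate has the smallest ratio to that of `x`, i.e. the
point lies in the triangle spanned by `x` and the first two vertices; the midpoint of these two
cuts it into a part near the first and a part near the second vertex. -/
lemma hexa_cover_aux {y₀ y₁ y₂ : E2} (ht : IsTri y₀ y₁ y₂) (hp : 0 < cr y₀ y₁)
    {m₀ m₁ m₂ : ℝ} (n2 : 0 ≤ m₂) (hsum : m₀ + m₁ + m₂ = 1)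
    (c0 : m₂ / cr y₀ y₁ * cr y₁ y₂ ≤ m₀) (c1 : m₂ / cr y₀ y₁ * cr y₂ y₀ ≤ m₁) :
    ∃ w ∈ latticeZ2, y₀ - (m₀ • y₀ + m₁ • y₁ + m₂ • y₂) - w ∈ hexa y₀ y₁ y₂ := by
  have hc : Convex ℝ (hexa y₀ y₁ y₂) := convex_convexHull ℝ _
  have hm0 : y₀ ∈ hexa y₀ y₁ y₂ := hexa_mem _ _ _
  have hm1 : y₁ ∈ hexa y₀ y₁ y₂ := by rw [← hexa_rot]; exact hexa_mem _ _ _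
  set c := m₂ / cr y₀ y₁ with hcdef
  have hc0 : 0 ≤ c := by positivity
  have hm2 : m₂ = c * cr y₀ y₁ := by rw [hcdef]; field_simp
  have hz := bary_zero y₀ y₁ y₂
  obtain ⟨hl, -, h3⟩ := ht
  obtain ⟨a, ha⟩ : ∃ a, m₀ = c * cr y₁ y₂ + a := ⟨m₀ - c * cr y₁ y₂, by ring⟩
  obtain ⟨b, hb⟩ : ∃ b, m₁ = c * cr y₂ y₀ + b := ⟨m₁ - c * cr y₂ y₀, by ring⟩
  have ha0 : 0 ≤ a := by linarith
  have hb0 : 0 ≤ b := by linarith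
  have habc : a = 1 - c - b := by
    rw [ha, hb, hm2] at hsum
    linear_combination hsum - c * h3
  have hpt : y₀ - (m₀ • y₀ + m₁ • y₁ + m₂ • y₂) = (c + b) • y₀ + (-b) • y₁ := by
    rw [ha, hb, hm2, habc]
    have hsplit : y₀ - ((c * cr y₁ y₂ + (1 - c - b)) • y₀ + (c * cr y₂ y₀ + b) • y₁ +
        (c * cr y₀ y₁) • y₂) = (c + b) • y₀ + (-b) • y₁ -
        c • (cr y₁ y₂ • y₀ + cr y₂ y₀ • y₁ + cr y₀ y₁ • y₂) := by module
    rw [hsplit, hz, smul_zero, sub_zero]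
  rw [hpt]
  rcases le_total b a with hab | hab
  · refine ⟨0, lat_zero, ?_⟩
    rw [sub_zero]
    apply comb_mem_abs hc hexa_symm hm0 hm1
    rw [abs_neg, abs_of_nonneg hb0, abs_of_nonneg (by positivity)]
    linarith
  · refine ⟨y₀ - y₁, hl, ?_⟩
    have : (c + b) • y₀ + (-b) • y₁ - (y₀ - y₁) = (-a) • y₀ + (c + a) • y₁ := by
      rw [habc]; module
    rw [this]
    apply comb_mem_abs hc hexa_symm hm0 hm1
    rw [abs_neg, abs_of_nonneg ha0, abs_of_nonneg (by positivity)]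
    linarith

lemma hexa_cover_tri {y₀ y₁ y₂ : E2} (ht : IsTri y₀ y₁ y₂) (h0 : 0 < cr y₁ y₂)
    (h1 : 0 < cr y₂ y₀) (h2 : 0 < cr y₀ y₁)
    {m₀ m₁ m₂ : ℝ} (n0 : 0 ≤ m₀) (n1 : 0 ≤ m₁) (n2 : 0 ≤ m₂) (hsum : m₀ + m₁ + m₂ = 1) :
    ∃ w ∈ latticeZ2, y₀ - (m₀ • y₀ + m₁ • y₁ + m₂ • y₂) - w ∈ hexa y₀ y₁ y₂ := by
  have hcases : (m₂ / cr y₀ y₁ ≤ m₀ / cr y₁ y₂ ∧ m₂ / cr y₀ y₁ ≤ m₁ / cr y₂ y₀) ∨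
      (m₀ / cr y₁ y₂ ≤ m₁ / cr y₂ y₀ ∧ m₀ / cr y₁ y₂ ≤ m₂ / cr y₀ y₁) ∨
      (m₁ / cr y₂ y₀ ≤ m₂ / cr y₀ y₁ ∧ m₁ / cr y₂ y₀ ≤ m₀ / cr y₁ y₂) := by
    rcases le_total (m₂ / cr y₀ y₁) (m₀ / cr y₁ y₂) with h | h <;>
    rcases le_total (m₂ / cr y₀ y₁) (m₁ / cr y₂ y₀) with h' | h' <;>
    rcases le_total (m₁ / cr y₂ y₀) (m₀ / cr y₁ y₂) with h'' | h'' <;> grind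
  rcases hcases with ⟨a, b⟩ | ⟨a, b⟩ | ⟨a, b⟩
  · exact hexa_cover_aux ht h2 n2 hsum ((le_div_iff₀ h0).1 a) ((le_div_iff₀ h1).1 b)
  · obtain ⟨w, hw, hmem⟩ := hexa_cover_aux ht.rot h0 n0 (by linarith : m₁ + m₂ + m₀ = 1)
      ((le_div_iff₀ h1).1 a) ((le_div_iff₀ h2).1 b)
    refine ⟨w + (y₀ - y₁), lat_add hw ht.1, ?_⟩
    rw [hexa_rot] at hmem
    convert hmem using 1
    abel
  · obtain ⟨w, hw, hmem⟩ := hexa_cover_aux ht.rot.rot h1 n1 (by linarith : m₂ + m₀ + m₁ = 1)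
      ((le_div_iff₀ h2).1 a) ((le_div_iff₀ h0).1 b)
    refine ⟨w + (y₀ - y₂), lat_add hw ht.2.1, ?_⟩
    rw [hexa_rot, hexa_rot] at hmem
    convert hmem using 1
    abel

lemma hexa_cover {y₀ y₁ y₂ : E2} (ht : IsTri y₀ y₁ y₂) (h0 : 0 < cr y₁ y₂)
    (h1 : 0 < cr y₂ y₀) (h2 : 0 < cr y₀ y₁) (z : E2) :
    ∃ w ∈ latticeZ2, z - w ∈ hexa y₀ y₁ y₂ := by
  have hdet : cr (y₀ - y₁) (y₀ - y₂) = 1 := by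
    simp only [cr_sub_left, cr_sub_right, cr_self, cr_swap y₁ y₀, cr_swap y₀ y₂]
    linarith [ht.2.2]
  have hze := cramer (y₀ - y₁) (y₀ - y₂) z
  rw [hdet, one_smul] at hze
  set p := cr z (y₀ - y₂)
  set q := cr (y₀ - y₁) z
  have hp := Int.floor_add_fract p
  have hq := Int.floor_add_fract q
  set s := Int.fract p with hs
  set t := Int.fract q with ht'
  have s0 : 0 ≤ s := Int.fract_nonneg _
  have s1 : s < 1 := Int.fract_lt_one _
  have t0 : 0 ≤ t := Int.fract_nonneg _
  have t1 : t < 1 := Int.fract_lt_one _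
  have hfl : (⌊p⌋ : ℝ) • (y₀ - y₁) + (⌊q⌋ : ℝ) • (y₀ - y₂) ∈ latticeZ2 :=
    lat_add (lat_zsmul ht.1 _) (lat_zsmul ht.2.1 _)
  have hze' : z = (⌊p⌋ : ℝ) • (y₀ - y₁) + (⌊q⌋ : ℝ) • (y₀ - y₂) +
      (s • (y₀ - y₁) + t • (y₀ - y₂)) := by
    calc z = p • (y₀ - y₁) + q • (y₀ - y₂) := hze
      _ = ((⌊p⌋ : ℝ) + s) • (y₀ - y₁) + ((⌊q⌋ : ℝ) + t) • (y₀ - y₂) := by rw [hp, hq]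
      _ = _ := by module
  rcases le_total (s + t) 1 with hst | hst
  · obtain ⟨w, hw, hmem⟩ := hexa_cover_tri ht h0 h1 h2 (m₀ := 1 - s - t) (m₁ := s) (m₂ := t)
      (by linarith) s0 t0 (by ring)
    refine ⟨_, lat_add hfl hw, ?_⟩
    convert hmem using 1
    nth_rewrite 1 [hze']
    module
  · -- the point lies in the complementary half of the period parallelogram: reflect it
    obtain ⟨w, hw, hmem⟩ := hexa_cover_tri ht h0 h1 h2 (m₀ := s + t - 1) (m₁ := 1 - s)
      (m₂ := 1 - t) (by linarith) (by linarith) (by linarith) (by ring)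
    refine ⟨_, lat_sub (lat_add hfl (lat_add ht.1 ht.2.1)) hw, ?_⟩
    convert hexa_symm _ hmem using 1
    nth_rewrite 1 [hze']
    module

/-- If all barycentric coordinates are below `1/2`, the hexagon is a nondegenerate spacefiller. -/
lemma hexa_spacefiller {K : Set E2} (hc : Convex ℝ K) (hs : ∀ z ∈ K, -z ∈ K) {y₀ y₁ y₂ : E2}
    (k0 : y₀ ∈ K) (k1 : y₁ ∈ K) (k2 : y₂ ∈ K) (ht : IsTri y₀ y₁ y₂) (h0 : cr y₁ y₂ < 1 / 2)
    (h1 : cr y₂ y₀ < 1 / 2) (h2 : cr y₀ y₁ < 1 / 2) :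
    ∃ L : Set E2, L ⊆ K ∧ Convex ℝ L ∧ IsSpacefiller L := by
  have hsum := ht.2.2
  have ext0 := hexa_extreme ht h0 h1 h2
  have ext1 := hexa_extreme ht.rot h1 h2 h0
  have ext2 := hexa_extreme ht.rot.rot h2 h0 h1
  have hcr : ∀ a b : E2, cr (-a) (-b) = cr a b := fun a b => by
    rw [cr_neg_left, cr_neg_right, neg_neg]
  have ext3 := hexa_extreme ht.neg (by rwa [hcr]) (by rwa [hcr]) (by rwa [hcr])
  have ext4 := hexa_extreme ht.rot.neg (by rwa [hcr]) (by rwa [hcr]) (by rwa [hcr])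
  have ext5 := hexa_extreme ht.rot.rot.neg (by rwa [hcr]) (by rwa [hcr]) (by rwa [hcr])
  rw [hexa_rot] at ext1
  rw [hexa_rot, hexa_rot] at ext2
  rw [hexa_neg] at ext3
  rw [hexa_neg, hexa_rot] at ext4
  rw [hexa_neg, hexa_rot, hexa_rot] at ext5
  refine ⟨hexa y₀ y₁ y₂, hexa_sub hc hs k0 k1 k2, convex_convexHull ℝ _,
    Or.inr ⟨0, ![y₀, -y₂, y₁, -y₀, y₂, -y₁], ?_, ?_, ?_⟩, ?_, ?_⟩
  · intro i
    fin_cases i <;> simp [Fin.add_def]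
  · unfold hexa
    congr 1
    ext z
    simp only [Set.mem_insert_iff, Set.mem_singleton_iff, Set.mem_range, Fin.exists_fin_succ]
    simp [eq_comm]
    tauto
  · intro i
    fin_cases i <;> assumption
  · rw [Set.eq_univ_iff_forall]
    intro z
    obtain ⟨w, hw, hz⟩ := hexa_cover ht (by linarith) (by linarith) (by linarith) z
    exact Set.mem_add.2 ⟨_, hz, w, hw, by abel⟩
  · exact disjoint_of_stripSep fun w hw hw0 => hexa_sep ht h0 h1 h2 hw hw0

/-- If `cr y₁ y₂ ≥ 1/2`, then the parallelogram `± y₁, ± y₂` contains a parallelogram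
`± y₁', ± y₂'` with `y₁' - y₂' = y₁ - y₂` and `cr y₁' y₂' = 1/2`. -/
lemma para_of_large {K : Set E2} (hc : Convex ℝ K) (hs : ∀ z ∈ K, -z ∈ K) {y₀ y₁ y₂ : E2}
    (k1 : y₁ ∈ K) (k2 : y₂ ∈ K) (ht : IsTri y₀ y₁ y₂) (h0 : 1 / 2 ≤ cr y₁ y₂) :
    ∃ L : Set E2, L ⊆ K ∧ Convex ℝ L ∧ IsSpacefiller L := by
  have hl := ht.rot.1
  have hw := ht.rot.2.1
  have hsum := ht.2.2
  have hpos : 0 < cr y₁ y₂ := by linarith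
  set r := (2 * cr y₁ y₂ - 1) / (4 * cr y₁ y₂) with hr
  have hr0 : 0 ≤ r := div_nonneg (by linarith) (by linarith)
  have hr1 : r ≤ 1 / 2 := by rw [hr, div_le_iff₀ (by linarith)]; linarith
  have hrc : (1 - 2 * r) * cr y₁ y₂ = 1 / 2 := by rw [hr]; field_simp; ring
  have habs : |1 - r| + |-r| ≤ 1 := by
    rw [abs_neg, abs_of_nonneg hr0, abs_of_nonneg (by linarith)]; linarith
  have habs' : |-r| + |1 - r| ≤ 1 := by linarith
  have hdiff : ((1 - r) • y₁ + (-r) • y₂) - ((-r) • y₁ + (1 - r) • y₂) = y₁ - y₂ := by module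
  refine para_spacefiller hc hs (comb_mem_abs hc hs k1 k2 habs) (comb_mem_abs hc hs k1 k2 habs')
    (hdiff ▸ hl) ?_ hw ?_
  · simp only [cr_add_left, cr_add_right, cr_smul_left, cr_smul_right, cr_self, cr_swap y₂ y₁]
    linear_combination hrc
  · rw [hdiff]
    simp only [cr_sub_left, cr_sub_right, cr_self, cr_swap y₁ y₀, cr_swap y₂ y₁]
    linear_combination hsum

lemma spacefiller_of_isTri {K : Set E2} (hc : Convex ℝ K) (hs : ∀ z ∈ K, -z ∈ K) {y₀ y₁ y₂ : E2}
    (k0 : y₀ ∈ K) (k1 : y₁ ∈ K) (k2 : y₂ ∈ K) (ht : IsTri y₀ y₁ y₂) :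
    ∃ L : Set E2, L ⊆ K ∧ Convex ℝ L ∧ IsSpacefiller L := by
  rcases le_or_gt (1 / 2) (cr y₁ y₂) with h0 | h0
  · exact para_of_large hc hs k1 k2 ht h0
  rcases le_or_gt (1 / 2) (cr y₂ y₀) with h1 | h1
  · exact para_of_large hc hs k2 k0 ht.rot h1
  rcases le_or_gt (1 / 2) (cr y₀ y₁) with h2 | h2
  · exact para_of_large hc hs k0 k1 ht.rot.rot h2
  exact hexa_spacefiller hc hs k0 k1 k2 ht h0 h1 h2

/-! ### Unimodular lattice triangles -/

/-- A lattice triangle `0, u, v` that is not unimodular contains a further lattice point. -/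
lemma exists_inner_point {u v : E2} (hu : u ∈ latticeZ2) (hv : v ∈ latticeZ2) {D : ℤ}
    (hD : cr u v = D) (hD2 : 2 ≤ D.natAbs) :
    ∃ s t : ℝ, s • u + t • v ∈ latticeZ2 ∧ 0 ≤ s ∧ 0 ≤ t ∧ s + t ≤ 1 ∧
      ((0 < s ∧ s < 1) ∨ (0 < t ∧ t < 1)) := by
  have hD0 : (D : ℝ) ≠ 0 := by
    have : D ≠ 0 := by omega
    exact_mod_cast this
  -- `u, v` do not generate the lattice, since otherwise `D` would divide `cr e₁ e₂ = 1`
  obtain ⟨w, hw, hwn⟩ : ∃ w ∈ latticeZ2, ¬ ∃ m n : ℤ, w = (m : ℝ) • u + (n : ℝ) • v := by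
    by_contra! hcon
    have he1 : v2 1 0 ∈ latticeZ2 := by
      intro i
      fin_cases i
      · exact ⟨1, by simp [v2]⟩
      · exact ⟨0, by simp [v2]⟩
    have he2 : v2 0 1 ∈ latticeZ2 := by
      intro i
      fin_cases i
      · exact ⟨0, by simp [v2]⟩
      · exact ⟨1, by simp [v2]⟩
    obtain ⟨m, n, h1⟩ := hcon _ he1
    obtain ⟨k, l, h2⟩ := hcon _ he2
    have h3 : cr (v2 1 0) (v2 0 1) = 1 := by simp [cr, v2]
    rw [h1, h2] at h3
    simp only [cr_add_left, cr_add_right, cr_smul_left, cr_smul_right, cr_self, cr_swap v u,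
      hD] at h3
    have h4 : D * (m * l - n * k) = 1 := by
      have : (D : ℝ) * (m * l - n * k) = 1 := by linear_combination h3
      exact_mod_cast this
    have := Int.natAbs_dvd_natAbs.2 (Dvd.intro _ h4)
    have := Nat.le_of_dvd (by norm_num) this
    simp at this
    omega
  set p := cr w v / D
  set q := cr u w / D
  have hwe : w = p • u + q • v := by
    have := cramer u v w
    rw [hD] at this
    have h2 : w = (D : ℝ)⁻¹ • ((D : ℝ) • w) := by rw [smul_smul, inv_mul_cancel₀ hD0, one_smul]
    rw [h2, this, smul_add, smul_smul, smul_smul, inv_mul_eq_div, inv_mul_eq_div]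
  have hp := Int.floor_add_fract p
  have hq := Int.floor_add_fract q
  set s := Int.fract p with hs
  set t := Int.fract q with ht
  have s0 : 0 ≤ s := Int.fract_nonneg _
  have s1 : s < 1 := Int.fract_lt_one _
  have t0 : 0 ≤ t := Int.fract_nonneg _
  have t1 : t < 1 := Int.fract_lt_one _
  have hfl : (⌊p⌋ : ℝ) • u + (⌊q⌋ : ℝ) • v ∈ latticeZ2 :=
    lat_add (lat_zsmul hu _) (lat_zsmul hv _)
  have hwe' : w = ((⌊p⌋ : ℝ) + s) • u + ((⌊q⌋ : ℝ) + t) • v := by rw [hp, hq]; exact hwe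
  have hlat : s • u + t • v ∈ latticeZ2 := by
    have : s • u + t • v = w - ((⌊p⌋ : ℝ) • u + (⌊q⌋ : ℝ) • v) := by
      nth_rewrite 1 [hwe']; module
    rw [this]
    exact lat_sub hw hfl
  have hne : 0 < s ∨ 0 < t := by
    by_contra! hcon
    have hs0 : s = 0 := le_antisymm hcon.1 s0
    have ht0 : t = 0 := le_antisymm hcon.2 t0
    exact hwn ⟨⌊p⌋, ⌊q⌋, by rw [hs0, ht0, add_zero, add_zero] at hwe'; exact hwe'⟩
  rcases le_or_gt (s + t) 1 with hst | hst
  · exact ⟨s, t, hlat, s0, t0, hst, hne.imp (fun h => ⟨h, s1⟩) (fun h => ⟨h, t1⟩)⟩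
  · refine ⟨1 - s, 1 - t, ?_, by linarith, by linarith, by linarith,
      Or.inl ⟨by linarith, by linarith⟩⟩
    have : (1 - s) • u + (1 - t) • v = (u + v) - (s • u + t • v) := by module
    rw [this]
    exact lat_sub (lat_add hu hv) hlat

/-- If some translate of the convex set `K` contains a nondegenerate lattice triangle, then it
contains a unimodular one. -/
lemma exists_isTri {K : Set E2} (hc : Convex ℝ K) : ∀ (n : ℕ) (y₀ y₁ y₂ : E2) (D : ℤ),
    y₀ ∈ K → y₁ ∈ K → y₂ ∈ K → y₀ - y₁ ∈ latticeZ2 → y₀ - y₂ ∈ latticeZ2 →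
    cr (y₀ - y₁) (y₀ - y₂) = D → D ≠ 0 → D.natAbs = n →
    ∃ z₀ ∈ K, ∃ z₁ ∈ K, ∃ z₂ ∈ K, IsTri z₀ z₁ z₂ := by
  intro n
  induction n using Nat.strong_induction_on with
  | _ n ih =>
    intro y₀ y₁ y₂ D k0 k1 k2 l1 l2 hD hD0 hn
    rcases Nat.lt_or_ge n 2 with hn2 | hn2
    · have hdet : cr y₁ y₂ + cr y₂ y₀ + cr y₀ y₁ = D := by
        rw [← hD]
        simp only [cr_sub_left, cr_sub_right, cr_self, cr_swap y₁ y₀, cr_swap y₀ y₂]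
        ring
      have : D = 1 ∨ D = -1 := by omega
      rcases this with rfl | rfl
      · exact ⟨y₀, k0, y₁, k1, y₂, k2, l1, l2, by rw [hdet]; simp⟩
      · refine ⟨y₀, k0, y₂, k2, y₁, k1, l2, l1, ?_⟩
        push_cast at hdet
        rw [cr_swap y₂ y₁, cr_swap y₁ y₀, cr_swap y₀ y₂]
        linarith
    · obtain ⟨s, t, hl, s0, t0, hst, hcase⟩ := exists_inner_point l1 l2 hD (by omega)
      set q := s • (y₀ - y₁) + t • (y₀ - y₂) with hq
      have hqK : y₀ - q ∈ K := by
        have := hc.sum_mem (t := Finset.univ) (w := ![1 - s - t, s, t]) (z := ![y₀, y₁, y₂])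
          (by intro i _; fin_cases i <;> simp <;> linarith)
          (by simp [Fin.sum_univ_three]; ring)
          (by intro i _; fin_cases i <;> simp [k0, k1, k2])
        rw [Fin.sum_univ_three] at this
        convert this using 1
        simp [hq]
        module
      have hqq : y₀ - (y₀ - q) = q := by abel
      have hlq : y₀ - (y₀ - q) ∈ latticeZ2 := by rw [hqq]; exact hl
      have hsmall : ∀ (r : ℝ) (D' : ℤ), 0 < r → r < 1 → (D' : ℝ) = r * D →
          D' ≠ 0 ∧ D'.natAbs < n := by
        intro r D' hr0 hr1 hD'
        have hDR : (D : ℝ) ≠ 0 := by exact_mod_cast hD0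
        constructor
        · rintro rfl
          have : r * (D : ℝ) ≠ 0 := mul_ne_zero hr0.ne' hDR
          exact this (by rw [← hD']; simp)
        · rw [← hn]
          have : |(D' : ℝ)| < |(D : ℝ)| := by
            rw [hD', abs_mul, abs_of_pos hr0]
            have := abs_pos.2 hDR
            nlinarith
          have h2 : |D'| < |D| := by exact_mod_cast this
          rw [Int.abs_eq_natAbs, Int.abs_eq_natAbs] at h2
          exact_mod_cast h2
      rcases hcase with ⟨hs0, hs1⟩ | ⟨ht0, ht1⟩
      · obtain ⟨D', hD'⟩ := lat_cr hlq l2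
        have hval : (D' : ℝ) = s * D := by
          rw [← hD', hqq, hq, cr_add_left, cr_smul_left, cr_smul_left, cr_self, hD]; ring
        obtain ⟨n1, n2⟩ := hsmall s D' hs0 hs1 hval
        exact ih _ n2 y₀ (y₀ - q) y₂ D' k0 hqK k2 hlq l2 hD' n1 rfl
      · obtain ⟨D', hD'⟩ := lat_cr l1 hlq
        have hval : (D' : ℝ) = t * D := by
          rw [← hD', hqq, hq, cr_add_right, cr_smul_right, cr_smul_right, cr_self, hD]; ring
        obtain ⟨n1, n2⟩ := hsmall t D' ht0 ht1 hval
        exact ih _ n2 y₀ y₁ (y₀ - q) D' k0 k1 hqK l1 hlq hD' n1 rfl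


/-! ### Points farthest from the lattice -/

lemma lat_finite (R : ℝ) : {a : E2 | a ∈ latticeZ2 ∧ ‖a‖ ≤ R}.Finite := by
  have hfin : ((fun p : ℤ × ℤ => v2 p.1 p.2) '' (Icc (-⌈R⌉) ⌈R⌉ ×ˢ Icc (-⌈R⌉) ⌈R⌉)).Finite :=
    ((finite_Icc _ _).prod (finite_Icc _ _)).image _
  refine hfin.subset ?_
  rintro a ⟨ha, hR⟩
  have hb : ∀ (i : Fin 2) (m : ℤ), a i = m → m ∈ Icc (-⌈R⌉) ⌈R⌉ := by
    intro i m hm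
    have h1 : |a i| ≤ R := (PiLp.norm_apply_le a i).trans hR
    rw [hm] at h1
    have h2 : |(m : ℝ)| ≤ (⌈R⌉ : ℤ) := h1.trans (Int.le_ceil R)
    have h3 : |m| ≤ ⌈R⌉ := by exact_mod_cast h2
    exact abs_le.1 h3
  obtain ⟨m, hm⟩ := ha 0
  obtain ⟨n, hn⟩ := ha 1
  refine ⟨(m, n), ⟨hb 0 m hm, hb 1 n hn⟩, ?_⟩
  apply e2_ext
  · simp [v2, hm]
  · simp [v2, hn]

lemma lat_closed : IsClosed latticeZ2 := by
  have : latticeZ2 = ⋂ i : Fin 2, (fun v : E2 => v i) ⁻¹' (range ((↑) : ℤ → ℝ)) := by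
    ext v
    simp [latticeZ2, eq_comm]
  rw [this]
  refine isClosed_iInter fun i => ?_
  exact Int.isClosedEmbedding_coe_real.isClosed_range.preimage (by fun_prop)

/-- Three distinct points on a level set of a strictly convex function are not collinear. -/
lemma cr_ne_zero_of_level {φ : E2 → ℝ} (hφ : StrictConvexOn ℝ univ φ) {r : ℝ} {p q s : E2}
    (hp : φ p = r) (hq : φ q = r) (hs : φ s = r) (hpq : p ≠ q) (hps : p ≠ s) (hqs : q ≠ s) :
    cr (q - p) (s - p) ≠ 0 := by
  have key : ∀ {p q : E2} {k : ℝ}, φ p = r → φ q = r → p ≠ q → 0 < k → k < 1 →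
      φ (p + k • (q - p)) < r := by
    intro p q k hp hq hpq k0 k1
    have h := hφ.2 (mem_univ p) (mem_univ q) hpq (sub_pos.2 k1) k0 (by ring)
    rw [hp, hq, smul_eq_mul, smul_eq_mul] at h
    have e : p + k • (q - p) = (1 - k) • p + k • q := by module
    rw [e]
    linarith
  intro hcr
  obtain ⟨k, hk⟩ : ∃ k : ℝ, s = p + k • (q - p) := by
    have hne : (q - p) 0 ^ 2 + (q - p) 1 ^ 2 ≠ 0 := by
      intro h0
      apply hpq
      have h1 : (q - p) 0 = 0 := by nlinarith [sq_nonneg ((q - p) 0), sq_nonneg ((q - p) 1)]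
      have h2 : (q - p) 1 = 0 := by nlinarith [sq_nonneg ((q - p) 0), sq_nonneg ((q - p) 1)]
      have h3 : q - p = 0 := e2_ext (by simpa using h1) (by simpa using h2)
      exact (sub_eq_zero.1 h3).symm
    refine ⟨((q - p) 0 * (s - p) 0 + (q - p) 1 * (s - p) 1) /
      ((q - p) 0 ^ 2 + (q - p) 1 ^ 2), ?_⟩
    unfold cr at hcr
    rw [← sub_eq_iff_eq_add']
    generalize q - p = u at *
    generalize s - p = v at *
    apply e2_ext
    · rw [PiLp.smul_apply, smul_eq_mul]
      field_simp
      linear_combination (-(u 1)) * hcr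
    · rw [PiLp.smul_apply, smul_eq_mul]
      field_simp
      linear_combination (u 0) * hcr
  rcases lt_trichotomy k 0 with h | h | h
  · have h2 := key (k := 1 / (1 - k)) hq hs hqs (by apply one_div_pos.2; linarith)
      (by rw [div_lt_one (by linarith)]; linarith)
    have e : q + (1 / (1 - k)) • (s - q) = p := by
      have h1 : 1 - k ≠ 0 := by linarith
      have : s - q = (1 - k) • (p - q) := by rw [hk]; module
      rw [this, smul_smul, one_div_mul_cancel h1]; module
    rw [e] at h2
    linarith
  · apply hps; rw [hk, h]; simp
  rcases lt_trichotomy k 1 with h' | h' | h'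
  · have h2 := key hp hq hpq h h'
    rw [← hk] at h2
    linarith
  · apply hqs; rw [hk, h']; simp
  · have h2 := key (k := 1 / k) hp hs hps (by positivity)
      (by rw [div_lt_one h]; exact h')
    have e : p + (1 / k) • (s - p) = q := by
      have : s - p = k • (q - p) := by rw [hk]; module
      rw [this, smul_smul, one_div_mul_cancel h.ne']; module
    rw [e] at h2
    linarith

/-- Let `φ` be strictly convex, of at least quadratic growth. A point `x` for which the `φ`-distance to
the lattice is as large as possible has three non-collinear nearest lattice points: otherwise
the supporting lines of the sublevel sets leave a direction in which `x` can be moved further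
away from the lattice. -/
lemma exists_deep_point {K : Set E2} (hK : IsCompact K) (hne : K.Nonempty)
    (hcov : K + latticeZ2 = univ) {φ : E2 → ℝ} (hφ : StrictConvexOn ℝ univ φ)
    (hcont : Continuous φ) {ε : ℝ} (hε : 0 < ε) (hgrow : ∀ y, ε * ‖y‖ ^ 2 ≤ φ y) :
    ∃ x, ∃ a ∈ latticeZ2, ∃ b ∈ latticeZ2, ∃ c ∈ latticeZ2, cr (b - a) (c - a) ≠ 0 ∧
      ∀ d ∈ latticeZ2, φ (x - a) ≤ φ (x - d) ∧ φ (x - b) ≤ φ (x - d) ∧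
        φ (x - c) ≤ φ (x - d) := by
  -- sublevel sets of `φ` meet the lattice in finitely many points
  have hbd : ∀ y r, φ y ≤ r → ‖y‖ ≤ √(r / ε) := by
    intro y r h
    apply Real.le_sqrt_of_sq_le
    rw [le_div_iff₀ hε]
    linarith [hgrow y]
  have hmin : ∀ y : E2, ∃ a ∈ latticeZ2, ∀ d ∈ latticeZ2, φ (y - a) ≤ φ (y - d) := by
    intro y
    have hfin : {a : E2 | a ∈ latticeZ2 ∧ φ (y - a) ≤ φ y}.Finite := by
      refine (lat_finite (‖y‖ + √(φ y / ε))).subset ?_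
      rintro a ⟨ha, h⟩
      refine ⟨ha, ?_⟩
      have h1 := hbd _ _ h
      have h2 : ‖a‖ ≤ ‖y‖ + ‖y - a‖ := by
        have := norm_sub_le y (y - a)
        simpa using this
      linarith
    obtain ⟨a, ⟨ha, h1⟩, h2⟩ := Set.exists_min_image _ (fun a => φ (y - a)) hfin
      ⟨0, lat_zero, by simp⟩
    refine ⟨a, ha, fun d hd => ?_⟩
    rcases le_total (φ (y - d)) (φ y) with h | h
    · exact h2 d ⟨hd, h⟩
    · exact h1.trans h
  choose m hmL hmle using hmin
  have husc : UpperSemicontinuousOn (fun y => φ (y - m y)) K := by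
    intro y _ z hz
    have h1 : ∀ᶠ y' in nhds y, φ (y' - m y) < z := by
      have : Continuous fun y' => φ (y' - m y) := by fun_prop
      exact this.continuousAt.eventually_lt continuousAt_const hz
    filter_upwards [mem_nhdsWithin_of_mem_nhds h1] with y' hy'
    exact (hmle y' _ (hmL y)).trans_lt hy'
  obtain ⟨x, -, hmax⟩ := husc.exists_isMaxOn hne hK
  set r := φ (x - m x) with hr
  have hall : ∀ y, ∃ a ∈ latticeZ2, φ (y - a) ≤ r := by
    intro y
    have hy : y ∈ K + latticeZ2 := by rw [hcov]; trivial
    obtain ⟨k, hk, l, hl, rfl⟩ := hy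
    refine ⟨l + m k, lat_add hl (hmL k), ?_⟩
    have h := hmax hk
    have e : k + l - (l + m k) = k - m k := by abel
    simp only [e]
    exact h
  have hdir : ∀ d : E2, d ≠ 0 → ∃ a ∈ latticeZ2, φ (x - a) = r ∧ ∃ t : ℝ, 0 < t ∧
      φ (x - a + t • d) < r := by
    intro d hd
    set C := {a : E2 | a ∈ latticeZ2 ∧ ‖a‖ ≤ ‖x‖ + ‖d‖ + √(r / ε)} with hC
    have hfin : C.Finite := lat_finite _
    have hev : ∀ᶠ t in nhdsWithin (0 : ℝ) (Ioi 0),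
        ∀ a ∈ C, r < φ (x - a) → r < φ (x - a + t • d) := by
      rw [Filter.eventually_all_finite hfin]
      intro a _
      by_cases h : r < φ (x - a)
      · have hc : Continuous fun t : ℝ => φ (x - a + t • d) := by fun_prop
        have h0 : r < φ (x - a + (0 : ℝ) • d) := by simpa using h
        have := continuousAt_const.eventually_lt hc.continuousAt h0
        filter_upwards [mem_nhdsWithin_of_mem_nhds this] with t ht _
        exact ht
      · exact Filter.Eventually.of_forall fun t h' => absurd h' h
    have hsmall : ∀ᶠ t in nhdsWithin (0 : ℝ) (Ioi 0), t ∈ Ioo (0 : ℝ) 1 :=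
      Ioo_mem_nhdsGT one_pos
    obtain ⟨t, ht, t0, t1⟩ := (hev.and hsmall).exists
    obtain ⟨a, ha, hle⟩ := hall (x + t • d)
    have e1 : x + t • d - a = x - a + t • d := by abel
    have hb := hbd _ _ hle
    have haC : a ∈ C := by
      refine ⟨ha, ?_⟩
      have h1 : ‖a‖ ≤ ‖x + t • d‖ + ‖x + t • d - a‖ := by
        have := norm_sub_le (x + t • d) (x + t • d - a)
        rwa [sub_sub_cancel] at this
      have h2 : ‖x + t • d‖ ≤ ‖x‖ + ‖d‖ := by
        refine (norm_add_le _ _).trans ?_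
        rw [norm_smul, Real.norm_of_nonneg t0.le]
        nlinarith [norm_nonneg d]
      linarith
    rw [e1] at hle
    have har : φ (x - a) = r := by
      refine le_antisymm ?_ (hmle x a ha)
      by_contra! h
      linarith [ht a haC h]
    -- strict convexity makes the value at half the step strictly smaller
    refine ⟨a, ha, har, t / 2, by positivity, ?_⟩
    have hne' : x - a ≠ x - a + t • d := by
      intro h
      have : t • d = 0 := by simpa using h
      rcases smul_eq_zero.1 this with h | h
      · exact t0.ne' h
      · exact hd h
    have h := hφ.2 (mem_univ _) (mem_univ _) hne' (half_pos one_pos) (half_pos one_pos)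
      (add_halves (1 : ℝ))
    have e2 : x - a + (t / 2) • d = (1 / 2 : ℝ) • (x - a) + (1 / 2 : ℝ) • (x - a + t • d) := by
      module
    rw [e2]
    simp only [smul_eq_mul] at h
    linarith
  have hsupp : ∀ a : E2, ∃ f : StrongDual ℝ E2, φ (x - a) = r →
      ∀ y, φ y < r → f y < f (x - a) := by
    intro a
    by_cases h : φ (x - a) = r
    · have hconv : Convex ℝ {y | φ y < r} := by
        simpa using hφ.convexOn.convex_lt r
      have hopen : IsOpen {y | φ y < r} := isOpen_lt hcont continuous_const
      obtain ⟨f, hf⟩ := geometric_hahn_banach_open_point hconv hopen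
        (x := x - a) (by simp [h])
      exact ⟨f, fun _ y hy => hf y hy⟩
    · exact ⟨0, fun h' => absurd h' h⟩
  choose f hf using hsupp
  have hneg : ∀ d : E2, d ≠ 0 → ∃ a ∈ latticeZ2, φ (x - a) = r ∧ f a d < 0 := by
    intro d hd
    obtain ⟨a, ha, har, t, t0, ht⟩ := hdir d hd
    refine ⟨a, ha, har, ?_⟩
    have h := hf a har _ ht
    rw [map_add, map_smul, smul_eq_mul] at h
    nlinarith
  have hthird : ∀ a b : E2, ∃ c ∈ latticeZ2, φ (x - c) = r ∧ c ≠ a ∧ c ≠ b := by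
    intro a b
    obtain ⟨d, hd, hd0⟩ : ∃ d : E2, f a d = 0 ∧ d ≠ 0 := by
      have hker : LinearMap.ker (f a : E2 →ₗ[ℝ] ℝ) ≠ ⊥ :=
        LinearMap.ker_ne_bot_of_finrank_lt (by simp)
      obtain ⟨d, hd, hd0⟩ := (Submodule.ne_bot_iff _).1 hker
      exact ⟨d, by simpa using hd, hd0⟩
    obtain ⟨d, hd, hd0, hdb⟩ : ∃ d : E2, f a d = 0 ∧ d ≠ 0 ∧ 0 ≤ f b d := by
      rcases le_total 0 (f b d) with h | h
      · exact ⟨d, hd, hd0, h⟩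
      · exact ⟨-d, by simp [hd], by simpa using hd0, by simpa using h⟩
    obtain ⟨c, hc, hcr, hlt⟩ := hneg d hd0
    refine ⟨c, hc, hcr, ?_, ?_⟩
    · rintro rfl; linarith
    · rintro rfl; linarith
  obtain ⟨b, hb, hbr, hba, -⟩ := hthird (m x) (m x)
  obtain ⟨c, hc, hcr, hca, hcb⟩ := hthird (m x) b
  refine ⟨x, m x, hmL x, b, hb, c, hc, ?_, fun d hd => ?_⟩
  · have h := cr_ne_zero_of_level hφ (p := x - m x) (q := x - b) (s := x - c) rfl hbr hcr
      (by simpa using hba.symm) (by simpa using hca.symm) (by simpa using hcb.symm)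
    have e1 : x - b - (x - m x) = -(b - m x) := by abel
    have e2 : x - c - (x - m x) = -(c - m x) := by abel
    rw [e1, e2, cr_neg_left, cr_neg_right, neg_neg] at h
    exact h
  · have h := hmle x d hd
    exact ⟨h, by rw [hbr]; exact h, by rw [hcr]; exact h⟩

/-! ### Three congruent points in the body -/

/-- Up to an arbitrarily small dilation, `K` contains a nondegenerate triangle whose vertices are
congruent modulo the lattice. The square of the norm is added to the gauge of `K` to make it
strictly convex. -/
lemma exists_approx_triple {K : Set E2} (hK : IsCompact K) (hconv : Convex ℝ K)
    (h0 : K ∈ nhds (0 : E2)) (hcov : K + latticeZ2 = univ) {δ : ℝ} (hδ : 0 < δ) :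
    ∃ y₀ y₁ y₂ : E2, gauge K y₀ ≤ 1 + δ ∧ gauge K y₁ ≤ 1 + δ ∧ gauge K y₂ ≤ 1 + δ ∧
      y₀ - y₁ ∈ latticeZ2 ∧ y₀ - y₂ ∈ latticeZ2 ∧ 1 ≤ |cr (y₀ - y₁) (y₀ - y₂)| := by
  obtain ⟨R, hR0, hR⟩ : ∃ R : ℝ, 0 < R ∧ ∀ y ∈ K, ‖y‖ ≤ R := hK.isBounded.exists_pos_norm_le
  have habs : Absorbent ℝ K := absorbent_nhds_zero h0
  set ε := δ / R ^ 2 with hε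
  have hε0 : 0 < ε := by positivity
  have hgc : ConvexOn ℝ univ (gauge K) := by
    refine ⟨convex_univ, fun p _ q _ a b ha hb _ => ?_⟩
    refine (gauge_add_le hconv habs _ _).trans ?_
    rw [gauge_smul_of_nonneg ha, gauge_smul_of_nonneg hb]
  have hφ : StrictConvexOn ℝ univ (fun y => gauge K y + ε * ‖y‖ ^ 2) := by
    have h : StrongConvexOn univ (2 * ε) (fun y => gauge K y + ε * ‖y‖ ^ 2) := by
      rw [strongConvexOn_iff_convex]
      have e : (fun y : E2 => gauge K y + ε * ‖y‖ ^ 2 - 2 * ε / 2 * ‖y‖ ^ 2) = gauge K := by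
        funext y
        ring
      rw [e]
      exact hgc
    exact h.strictConvexOn (by positivity)
  have hcont : Continuous (fun y => gauge K y + ε * ‖y‖ ^ 2) := by
    have := continuous_gauge hconv h0
    fun_prop
  obtain ⟨x, a, ha, b, hb, c, hc, hcr, hmin⟩ := exists_deep_point hK ⟨0, mem_of_mem_nhds h0⟩
    hcov hφ hcont hε0 (fun y => le_add_of_nonneg_left (gauge_nonneg y))
  have hx : x ∈ K + latticeZ2 := by rw [hcov]; trivial
  obtain ⟨k, hk, l, hl, rfl⟩ := hx
  have hup : gauge K (k + l - l) + ε * ‖k + l - l‖ ^ 2 ≤ 1 + δ := by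
    rw [add_sub_cancel_right]
    have h1 := gauge_le_one_of_mem hk
    have h2 : ε * ‖k‖ ^ 2 ≤ ε * R ^ 2 := by
      have := hR k hk
      gcongr
    have h3 : ε * R ^ 2 = δ := by rw [hε]; field_simp
    linarith
  have hle : ∀ z : E2, gauge K z + ε * ‖z‖ ^ 2 ≤ 1 + δ → gauge K z ≤ 1 + δ := by
    intro z hz
    have : 0 ≤ ε * ‖z‖ ^ 2 := by positivity
    linarith
  obtain ⟨g1, g2, g3⟩ := hmin l hl
  have e1 : k + l - a - (k + l - b) = b - a := by abel
  have e2 : k + l - a - (k + l - c) = c - a := by abel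
  refine ⟨k + l - a, k + l - b, k + l - c, hle _ (g1.trans hup), hle _ (g2.trans hup),
    hle _ (g3.trans hup), ?_, ?_, ?_⟩
  · rw [e1]; exact lat_sub hb ha
  · rw [e2]; exact lat_sub hc ha
  · rw [e1, e2]
    obtain ⟨D, hD⟩ := lat_cr (lat_sub hb ha) (lat_sub hc ha)
    rw [hD] at hcr ⊢
    have : D ≠ 0 := by exact_mod_cast hcr
    exact_mod_cast Int.one_le_abs this

/-- The dilation in `exists_approx_triple` is removed by compactness. -/
lemma exists_triple {K : Set E2} (hK : IsCompact K) (hconv : Convex ℝ K)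
    (h0 : K ∈ nhds (0 : E2)) (hcov : K + latticeZ2 = univ) :
    ∃ y₀ ∈ K, ∃ y₁ ∈ K, ∃ y₂ ∈ K,
      y₀ - y₁ ∈ latticeZ2 ∧ y₀ - y₂ ∈ latticeZ2 ∧ 1 ≤ |cr (y₀ - y₁) (y₀ - y₂)| := by
  obtain ⟨R, hR0, hR⟩ : ∃ R : ℝ, 0 < R ∧ ∀ y ∈ K, ‖y‖ ≤ R := hK.isBounded.exists_pos_norm_le
  have habs : Absorbent ℝ K := absorbent_nhds_zero h0
  have hg := continuous_gauge hconv h0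
  let B : ℕ → Set E2 := fun n => {y | gauge K y ≤ 1 + 1 / ((n : ℝ) + 1)}
  let T : Set (E2 × E2 × E2) := {p | p.1 - p.2.1 ∈ latticeZ2 ∧ p.1 - p.2.2 ∈ latticeZ2 ∧
    1 ≤ |cr (p.1 - p.2.1) (p.1 - p.2.2)|}
  have hBcl : ∀ n, IsClosed (B n) := fun n => isClosed_le hg continuous_const
  have hTcl : IsClosed T := by
    have h3 : IsClosed {p : E2 × E2 × E2 | 1 ≤ |cr (p.1 - p.2.1) (p.1 - p.2.2)|} := by
      refine isClosed_le continuous_const ?_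
      unfold cr
      fun_prop
    exact (lat_closed.preimage (by fun_prop)).inter
      ((lat_closed.preimage (by fun_prop)).inter h3)
  have hB0 : IsCompact (B 0) := by
    refine Metric.isCompact_of_isClosed_isBounded (hBcl 0)
      ((Metric.isBounded_closedBall (x := (0 : E2)) (r := 2 * R)).subset ?_)
    intro y hy
    have h1 : gauge K y ≤ 2 := by
      have : gauge K y ≤ 1 + 1 / (((0 : ℕ) : ℝ) + 1) := hy
      norm_num at this
      linarith
    have h2 := le_gauge_of_subset_closedBall (x := y) habs hR0.le
      (fun z hz => by simpa using hR z hz)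
    rw [div_le_iff₀ hR0] at h2
    rw [mem_closedBall_zero_iff]
    nlinarith
  have hBmono : ∀ n, B (n + 1) ⊆ B n := by
    intro n y hy
    have hy' : gauge K y ≤ 1 + 1 / (((n + 1 : ℕ) : ℝ) + 1) := hy
    refine hy'.trans ?_
    push_cast
    gcongr
    linarith
  obtain ⟨⟨y₀, y₁, y₂⟩, hy⟩ := IsCompact.nonempty_iInter_of_sequence_nonempty_isCompact_isClosed
    (fun n => (B n ×ˢ B n ×ˢ B n) ∩ T)
    (fun n => inter_subset_inter_left _
      (prod_mono (hBmono n) (prod_mono (hBmono n) (hBmono n))))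
    (fun n => by
      obtain ⟨y₀, y₁, y₂, h⟩ := exists_approx_triple hK hconv h0 hcov
        (δ := 1 / ((n : ℝ) + 1)) (by positivity)
      exact ⟨(y₀, y₁, y₂), ⟨h.1, h.2.1, h.2.2.1⟩, h.2.2.2⟩)
    ((hB0.prod (hB0.prod hB0)).inter_right hTcl)
    (fun n => ((hBcl n).prod ((hBcl n).prod (hBcl n))).inter hTcl)
  rw [mem_iInter] at hy
  have hmem : ∀ y, (∀ n, y ∈ B n) → y ∈ K := by
    intro y h
    rw [← hK.isClosed.closure_eq, ← gauge_le_one_iff_mem_closure hconv h0]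
    have hlim : Filter.Tendsto (fun n : ℕ => (1 : ℝ) + 1 / ((n : ℝ) + 1)) Filter.atTop
        (nhds (1 + 0)) := tendsto_one_div_add_atTop_nhds_zero_nat.const_add 1
    rw [add_zero] at hlim
    exact ge_of_tendsto' hlim h
  exact ⟨y₀, hmem _ fun n => (hy n).1.1, y₁, hmem _ fun n => (hy n).1.2.1,
    y₂, hmem _ fun n => (hy n).1.2.2, (hy 0).2⟩

lemma mem_nhds_zero_of_symm {K : Set E2} (hconv : Convex ℝ K) (hint : (interior K).Nonempty)
    (hsym : K = -K) : K ∈ nhds (0 : E2) := by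
  obtain ⟨p, hp⟩ := hint
  have hp' : -p ∈ interior K := by
    have h : IsOpen (-interior K) := isOpen_interior.neg
    have hsub : -interior K ⊆ K := by
      rw [hsym]
      exact neg_subset_neg.2 (by rw [← hsym]; exact interior_subset)
    exact interior_maximal hsub h (by simpa using hp)
  have h := hconv.interior hp hp' (a := 1 / 2) (b := 1 / 2) (by norm_num) (by norm_num)
    (by norm_num)
  rw [smul_neg, add_neg_cancel] at h
  exact mem_interior_iff_mem_nhds.1 h

/-- Fáry's theorem: a centrally symmetric convex body `K ⊆ ℝ²` with `K + ℤ² = ℝ²`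
contains a spacefiller with respect to `ℤ²`. -/
theorem contains_spacefiller_of_covers (K : Set E2) (hK : IsCompact K)
    (hconv : Convex ℝ K) (hint : (interior K).Nonempty) (hsym : K = -K)
    (hcov : K + latticeZ2 = Set.univ) :
    ∃ L : Set E2, L ⊆ K ∧ Convex ℝ L ∧ IsSpacefiller L := by
  have h0 := mem_nhds_zero_of_symm hconv hint hsym
  obtain ⟨y₀, k0, y₁, k1, y₂, k2, l1, l2, hcr⟩ := exists_triple hK hconv h0 hcov
  obtain ⟨D, hD⟩ := lat_cr l1 l2
  have hD0 : D ≠ 0 := by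
    rintro rfl
    rw [hD] at hcr
    norm_num at hcr
  obtain ⟨z₀, k0, z₁, k1, z₂, k2, ht⟩ :=
    exists_isTri hconv _ y₀ y₁ y₂ D k0 k1 k2 l1 l2 hD hD0 rfl
  have hs : ∀ z ∈ K, -z ∈ K := by
    intro z hz
    rw [hsym] at hz
    exact hz
  exact spacefiller_of_isTri hconv hs k0 k1 k2 ht
end
end

section
/- Let K ⊆ ℝ² be a compact convex set such that for every x₁ ∈ [−1/2, 1/2] the vertical section {y ∈ ℝ : (x₁, y) ∈ K} is nonempty and has one-dimensional Lebesgue measure at least 1. Then K + ℤ² = ℝ². -/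
/-!
Given `p = (p₁, p₂)`, subtract the nearest integer from `p₁` to land at an abscissa
`a ∈ [-1/2, 1/2]`. The section of `K` over `a` is compact and convex, hence a closed interval,
of length at least `1`, so it contains a point of `p₂ + ℤ` (`exists_sub_int_mem`). Thus `p` differs
from a point of `K` by an element of `ℤ²`.
-/

open Set Pointwise Real MeasureTheory

noncomputable section

lemma v2_eq (a b : ℝ) : v2 a b = !₂[a, b] := rfl

/-- A compact interval of length at least `1` meets every translate of `ℤ`. -/
lemma exists_sub_int_mem {S : Set ℝ} (hS : IsCompact S) (hc : S.OrdConnected)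
    (hne : S.Nonempty) (hvol : 1 ≤ volume S) (y : ℝ) : ∃ m : ℤ, y - m ∈ S := by
  have hsub : S ⊆ Icc (sInf S) (sSup S) := fun z hz =>
    ⟨csInf_le hS.bddBelow hz, le_csSup hS.bddAbove hz⟩
  have hlen : 1 ≤ sSup S - sInf S := by
    have h1 := hvol.trans (measure_mono hsub)
    rwa [Real.volume_Icc, ENNReal.one_le_ofReal] at h1
  refine ⟨⌊y - sInf S⌋, hc.out (hS.sInf_mem hne) (hS.sSup_mem hne) ⟨?_, ?_⟩⟩
  · linarith [Int.floor_le (y - sInf S)]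
  · linarith [Int.lt_floor_add_one (y - sInf S)]

/-- The vertical section is the preimage of `K` under a closed embedding of `ℝ`. -/
lemma isCompact_section {K : Set E2} (hK : IsCompact K) (a : ℝ) :
    IsCompact {z : ℝ | v2 a z ∈ K} := by
  have hcont : Continuous (fun z : ℝ => v2 a z) := by
    refine (PiLp.continuous_toLp 2 _).comp (continuous_pi fun i => ?_)
    fin_cases i
    · exact continuous_const
    · exact continuous_id
  have himg : IsCompact ((fun v : E2 => v 1) '' K) := hK.image (by fun_prop)
  refine himg.of_isClosed_subset (hK.isClosed.preimage hcont) fun z hz => ⟨v2 a z, hz, ?_⟩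
  simp [v2_eq]

lemma convex_section {K : Set E2} (hconv : Convex ℝ K) (a : ℝ) :
    Convex ℝ {z : ℝ | v2 a z ∈ K} := by
  intro z hz w hw s t hs ht hst
  have hmem := hconv hz hw hs ht hst
  have heq : s • v2 a z + t • v2 a w = v2 a (s • z + t • w) := by
    ext i
    fin_cases i
    · simp [v2_eq, ← add_mul, hst]
    · simp [v2_eq]
  rwa [heq] at hmem

/-- If every vertical section of a compact convex set `K ⊆ ℝ²` over `x₁ ∈ [-1/2,1/2]`
is nonempty with one-dimensional Lebesgue measure at least `1`, then `K + ℤ² = ℝ²`. -/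
theorem covers_of_sections_long (K : Set E2) (hK : IsCompact K) (hconv : Convex ℝ K)
    (h : ∀ a ∈ Icc (-(1/2) : ℝ) (1/2),
      ({z : ℝ | v2 a z ∈ K}).Nonempty ∧ 1 ≤ volume {z : ℝ | v2 a z ∈ K}) :
    K + latticeZ2 = Set.univ := by
  refine eq_univ_of_forall fun p => ?_
  obtain ⟨hne, hvol⟩ := h (p 0 - round (p 0)) (abs_le.mp (abs_sub_round (p 0)))
  obtain ⟨m, hm⟩ := exists_sub_int_mem (isCompact_section hK _)
    (convex_section hconv _).ordConnected hne hvol (p 1)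
  refine Set.mem_add.mpr ⟨_, hm, v2 (round (p 0)) m, fun i => ?_, ?_⟩
  · fin_cases i
    · exact ⟨round (p 0), by simp [v2_eq]⟩
    · exact ⟨m, by simp [v2_eq]⟩
  · ext i
    fin_cases i <;> simp [v2_eq]
end
end

section
/- Let K ⊆ ℝ² be a compact convex set with nonempty interior that is symmetric with respect to both coordinate axes, i.e., (x₁, x₂) ∈ K implies (−x₁, x₂) ∈ K and (x₁, −x₂) ∈ K. Then K + ℤ² = ℝ² if and only if K contains the square [−1/2, 1/2]². -/
/-!
If `K + ℤ² = ℝ²`, then `(1/2, 1/2) = k + u` with `k ∈ K` and `u ∈ ℤ²`, so both coordinates of `k`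
are half-odd-integers and have absolute value at least `1/2` (`half_le_abs`). By symmetry and
convexity, `K` contains the box spanned by the reflections of `k` (`mem_of_abs_le`), hence the
square `[-1/2, 1/2]²`. Conversely, rounding both coordinates to the nearest integer shows that the
integer translates of this square cover the plane.
-/

open Set Pointwise Real MeasureTheory

noncomputable section

@[simp] lemma v2_zero (a b : ℝ) : v2 a b 0 = a := rfl

@[simp] lemma v2_one (a b : ℝ) : v2 a b 1 = b := rfl

/-- A number `s` with `|s| ≤ |a|` is a convex combination of `a` and `-a`. -/
lemma exists_convex_comb {a s : ℝ} (h : |s| ≤ |a|) :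
    ∃ t r : ℝ, 0 ≤ t ∧ 0 ≤ r ∧ t + r = 1 ∧ t * a + r * (-a) = s := by
  rcases eq_or_ne a 0 with rfl | ha
  · have hs : s = 0 := by simpa using h
    exact ⟨1, 0, by norm_num, by norm_num, by norm_num, by simp [hs]⟩
  · have h1 : |s / a| ≤ 1 := by
      rw [abs_div]
      exact div_le_one_of_le₀ h (abs_nonneg a)
    obtain ⟨h2, h3⟩ := abs_le.mp h1
    refine ⟨(1 + s / a) / 2, (1 - s / a) / 2, by linarith, by linarith, by ring, ?_⟩
    field_simp
    ring

/-- A convex set symmetric in both axes contains, with each point `k`, the whole box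
`[-|k₀|, |k₀|] × [-|k₁|, |k₁|]` spanned by the reflections of `k`. -/
lemma mem_of_abs_le {K : Set E2} (hconv : Convex ℝ K)
    (hsym1 : ∀ x ∈ K, v2 (-(x 0)) (x 1) ∈ K)
    (hsym2 : ∀ x ∈ K, v2 (x 0) (-(x 1)) ∈ K)
    {k x : E2} (hk : k ∈ K) (h0 : |x 0| ≤ |k 0|) (h1 : |x 1| ≤ |k 1|) : x ∈ K := by
  have hy : v2 (x 0) (k 1) ∈ K := by
    obtain ⟨t, r, ht, hr, htr, e⟩ := exists_convex_comb h0
    convert hconv hk (hsym1 k hk) ht hr htr using 1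
    ext i
    fin_cases i
    · simp [← e]
    · simp [← add_mul, htr]
  obtain ⟨t, r, ht, hr, htr, e⟩ := exists_convex_comb h1
  convert hconv hy (hsym2 _ hy) ht hr htr using 1
  ext i
  fin_cases i
  · simp [← add_mul, htr]
  · simp [← e]

/-- Every half-odd-integer has absolute value at least `1/2`. -/
lemma half_le_abs {a : ℝ} {m : ℤ} (h : a + m = 1 / 2) : 1 / 2 ≤ |a| := by
  rcases le_or_gt m 0 with hm | hm
  · have : (m : ℝ) ≤ 0 := by exact_mod_cast hm
    exact le_abs.mpr (Or.inl (by linarith))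
  · have : (1 : ℝ) ≤ m := by exact_mod_cast hm
    exact le_abs.mpr (Or.inr (by linarith))

/-- For a compact convex body `K ⊆ ℝ²` symmetric with respect to both coordinate axes,
`K + ℤ² = ℝ²` if and only if `K` contains the square `[-1/2, 1/2]²`. -/
theorem covers_iff_contains_square (K : Set E2) (hK : IsCompact K) (hconv : Convex ℝ K)
    (hint : (interior K).Nonempty)
    (hsym1 : ∀ x ∈ K, v2 (-(x 0)) (x 1) ∈ K)
    (hsym2 : ∀ x ∈ K, v2 (x 0) (-(x 1)) ∈ K) :
    K + latticeZ2 = Set.univ ↔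
      {x : E2 | x 0 ∈ Icc (-(1/2) : ℝ) (1/2) ∧ x 1 ∈ Icc (-(1/2) : ℝ) (1/2)} ⊆ K := by
  constructor
  · intro h x hx
    obtain ⟨k, hk, u, hu, hku⟩ : v2 (1 / 2) (1 / 2) ∈ K + latticeZ2 := h ▸ mem_univ _
    have hku : k + u = v2 (1 / 2) (1 / 2) := hku
    have key : ∀ i, v2 (1 / 2) (1 / 2) i = 1 / 2 → 1 / 2 ≤ |k i| := by
      intro i hi
      obtain ⟨m, hm⟩ := hu i
      refine half_le_abs (m := m) ?_
      rw [← hm, ← hi, ← hku]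
      rfl
    exact mem_of_abs_le hconv hsym1 hsym2 hk
      ((abs_le.mpr hx.1).trans (key 0 rfl)) ((abs_le.mpr hx.2).trans (key 1 rfl))
  · intro h
    refine eq_univ_of_forall fun x => ?_
    refine ⟨v2 (x 0 - round (x 0)) (x 1 - round (x 1)), h ?_,
      v2 (round (x 0)) (round (x 1)), ?_, ?_⟩
    · exact ⟨abs_le.mp (abs_sub_round (x 0)), abs_le.mp (abs_sub_round (x 1))⟩
    · intro i
      fin_cases i
      · exact ⟨round (x 0), rfl⟩
      · exact ⟨round (x 1), rfl⟩
    · ext i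
      fin_cases i <;> simp
end
end

section
/- Let n ≥ 1 be an integer, let H₄ₙ denote the regular 4n-gon conv{(cos(2kπ/(4n)), sin(2kπ/(4n))) : k = 0, 1, …, 4n−1} ⊂ ℝ², and let t > 0. The following are equivalent: (i) t·H₄ₙ contains a lattice point of ℤ² in any position; (ii) t·H₄ₙ contains the closed Euclidean ball of radius √2/2 centered at the origin; (iii) t ≥ (√2/2)/cos(π/(4n)). -/
/-!
Write `a = π / (4n)`, so that `cos a` is the inradius of `H₄ₙ`.

* Every closed ball of radius `√2/2` contains a lattice point (round the coordinates of its
  centre), which gives (ii) → (i).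
* `H₄ₙ` contains the closed ball of radius `cos a` (`closedBall_subset_Hgon`): otherwise a linear
  functional `⟪w, ·⟫` separates a point of the ball from the vertices, but some vertex makes an
  angle at most `a` with `w`. Scaling by `t` gives (iii) → (ii).
* Since `4 ∣ 4n`, two pairs of opposite edges of `H₄ₙ` bound a square of inradius `cos a`
  (`Hgon_subset_square`). If `t cos a < √2/2`, place the polygon so that its centre is
  `(1/2, 1/2)` and this square becomes `|x - 1/2| + |y - 1/2| ≤ √2 t cos a < 1`, a region without
  lattice points. This gives (i) → (iii).
-/

open Set Pointwise Real MeasureTheory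

noncomputable section

/-- The regular `m`-gon `conv{(cos(2kπ/m), sin(2kπ/m)) : k = 0, …, m-1}`. -/
def Hgon (m : ℕ) : Set E2 :=
  convexHull ℝ
    {p | ∃ k : ℕ, k < m ∧ p = v2 (cos (2 * k * π / m)) (sin (2 * k * π / m))}

lemma norm_sq_E2 (x : E2) : ‖x‖ ^ 2 = x 0 ^ 2 + x 1 ^ 2 := by
  rw [EuclideanSpace.norm_sq_eq]; simp [Fin.sum_univ_two]

/-- The linear isometry of the plane with matrix `!![p, -q; q, p]`, where `p² + q² = 1`. -/
def rot (p q : ℝ) (h : p ^ 2 + q ^ 2 = 1) : E2 ≃ₗᵢ[ℝ] E2 :=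
  LinearIsometry.toLinearIsometryEquiv
    { toFun := fun y => v2 (p * y 0 - q * y 1) (q * y 0 + p * y 1)
      map_add' := fun x y => by ext i; fin_cases i <;> simp <;> ring
      map_smul' := fun r y => by ext i; fin_cases i <;> simp <;> ring
      norm_map' := fun y => by
        rw [← sq_eq_sq₀ (norm_nonneg _) (norm_nonneg _), norm_sq_E2, norm_sq_E2]
        simp only [LinearMap.coe_mk, AddHom.coe_mk, v2_zero, v2_one]
        linear_combination (y 0 ^ 2 + y 1 ^ 2) * h } rfl

lemma rot_apply (p q : ℝ) (h : p ^ 2 + q ^ 2 = 1) (y : E2) :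
    rot p q h y = v2 (p * y 0 - q * y 1) (q * y 0 + p * y 1) := rfl

/-- An odd multiple of `π / (4n)` is at distance at least `π / (4n)` from `πℤ`. -/
lemma abs_cos_odd_le (n : ℕ) (hn : 1 ≤ n) (j : ℤ) (hj : Odd j) :
    |cos (j * (π / (4 * n)))| ≤ cos (π / (4 * n)) := by
  have hn' : (0 : ℝ) < n := by exact_mod_cast hn
  set a : ℝ := π / (4 * n) with ha
  have hapos : 0 < a := by positivity
  have hpi : π = 4 * n * a := by rw [ha]; field_simp
  obtain ⟨i, m, hi0, hi1, hjm⟩ :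
      ∃ i m : ℤ, 1 ≤ i ∧ i ≤ 4 * n - 1 ∧ j = i + m * (4 * n) := by
    have h4 : (0 : ℤ) < 4 * n := by omega
    have h1 := Int.emod_nonneg j h4.ne'
    have h2 := Int.emod_lt_of_pos j h4
    have h3 := Int.emod_add_mul_ediv j (4 * n)
    refine ⟨j % (4 * n), j / (4 * n), ?_, by omega, by linarith⟩
    rcases h1.lt_or_eq with h | h
    · omega
    -- a multiple of `4n` is even
    · exfalso
      rw [← h, zero_add] at h3
      rw [← h3] at hj
      rcases hj with ⟨r, hr⟩
      have : 2 * (2 * (n * (j / (4 * n)))) = 2 * r + 1 := by rw [← hr]; ring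
      omega
  have hi0' : (1 : ℝ) ≤ i := by exact_mod_cast hi0
  have hi1' : (i : ℝ) ≤ 4 * n - 1 := by exact_mod_cast hi1
  have e : (j : ℝ) * a = i * a + m * π := by
    rw [hjm, hpi]; push_cast; ring
  rw [e, Real.cos_add_int_mul_pi, abs_mul, abs_zpow, abs_neg, abs_one, one_zpow, one_mul, abs_le]
  constructor
  · rw [neg_le, ← Real.cos_pi_sub]
    apply Real.cos_le_cos_of_nonneg_of_le_pi hapos.le <;> nlinarith
  · apply Real.cos_le_cos_of_nonneg_of_le_pi hapos.le <;> nlinarith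

/-- The polygon lies in the square cut out by the edge lines with outer normals at the angles
`a = π / (4n)`, `a + π / 2`, `a + π` and `a + 3π / 2`. -/
lemma Hgon_subset_square (n : ℕ) (hn : 1 ≤ n) {a : ℝ} (ha : a = π / (4 * n)) {y : E2}
    (hy : y ∈ Hgon (4 * n)) :
    |cos a * y 0 + sin a * y 1| ≤ cos a ∧ |-sin a * y 0 + cos a * y 1| ≤ cos a := by
  have hn' : (0 : ℝ) < n := by exact_mod_cast hn
  have hconv (p q r : ℝ) : Convex ℝ {y : E2 | |p * y 0 + q * y 1| ≤ r} := by
    have : {y : E2 | |p * y 0 + q * y 1| ≤ r} =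
        (p • (EuclideanSpace.proj 0 : E2 →L[ℝ] ℝ) + q • (EuclideanSpace.proj 1 : E2 →L[ℝ] ℝ)
          : E2 →L[ℝ] ℝ).toLinearMap ⁻¹' Set.Icc (-r) r := by
      ext y; simp [abs_le]
    rw [this]
    exact (convex_Icc _ _).linear_preimage _
  refine convexHull_min ?_ ((hconv (cos a) (sin a) (cos a)).inter
    (hconv (-sin a) (cos a) (cos a))) hy
  rintro _ ⟨k, -, rfl⟩
  have hang : (2 * k * π / ((4 * n : ℕ) : ℝ)) = 2 * k * a := by
    rw [ha]; push_cast; ring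
  have hpi : π / 2 = 2 * n * a := by rw [ha]; field_simp; norm_num
  simp only [Set.mem_inter_iff, Set.mem_ofPred_eq, v2_zero, v2_one, hang]
  constructor
  · have := abs_cos_odd_le n hn (2 * k - 1) ⟨k - 1, by ring⟩
    rw [← ha] at this
    convert this using 2
    push_cast
    rw [show (2 * (k : ℝ) - 1) * a = 2 * k * a - a by ring, Real.cos_sub]
    ring
  · have := abs_cos_odd_le n hn (2 * n - (2 * k - 1)) ⟨n - k, by ring⟩
    rw [← ha] at this
    convert this using 2
    push_cast
    rw [show (2 * (n : ℝ) - (2 * k - 1)) * a = π / 2 - (2 * k * a - a) by rw [hpi]; ring,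
      Real.cos_pi_div_two_sub, Real.sin_sub]
    ring

/-- The support function of the polygon is at least `cos (π / (4n))` on unit vectors. -/
lemma exists_vertex (n : ℕ) (hn : 1 ≤ n) (w : E2) :
    ∃ p ∈ Hgon (4 * n), ‖w‖ * cos (π / (4 * n)) ≤ inner ℝ w p := by
  have hn' : (0 : ℝ) < n := by exact_mod_cast hn
  have hn1 : (1 : ℝ) ≤ n := by exact_mod_cast hn
  set a : ℝ := π / (4 * n) with ha
  have hapos : 0 < a := by positivity
  have hpi : π = 4 * n * a := by rw [ha]; field_simp
  obtain ⟨θ, h0, h1⟩ : ∃ θ : ℝ, w 0 = ‖w‖ * cos θ ∧ w 1 = ‖w‖ * sin θ := by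
    have hw : ‖(⟨w 0, w 1⟩ : ℂ)‖ = ‖w‖ := by
      rw [← sq_eq_sq₀ (norm_nonneg _) (norm_nonneg _), norm_sq_E2, Complex.sq_norm,
        Complex.normSq_apply]
      ring
    refine ⟨Complex.arg ⟨w 0, w 1⟩, ?_, ?_⟩
    · rw [← hw, Complex.norm_mul_cos_arg]
    · rw [← hw, Complex.norm_mul_sin_arg]
  -- `2 * j * a` is the multiple of `2 * a` nearest to `θ`; the vertex index is `j` modulo `4n`
  set j : ℤ := round (θ / (2 * a)) with hj
  have h4 : (0 : ℤ) < 4 * n := by omega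
  have e1 := Int.emod_nonneg j h4.ne'
  have e2 := Int.emod_lt_of_pos j h4
  have e3 := Int.emod_add_mul_ediv j (4 * n)
  obtain ⟨k, hk⟩ := Int.eq_ofNat_of_zero_le e1
  rw [hk] at e2 e3
  have hang : 2 * k * π / ((4 * n : ℕ) : ℝ) = 2 * j * a - (j / (4 * n) : ℤ) * (2 * π) := by
    have : (j : ℝ) = k + 4 * n * (j / (4 * n) : ℤ) := by exact_mod_cast e3.symm
    generalize ((j / (4 * n) : ℤ) : ℝ) = m at this ⊢
    rw [this, hpi]; push_cast; field_simp; ring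
  refine ⟨_, subset_convexHull ℝ _ ⟨k, by omega, rfl⟩, ?_⟩
  have hin : inner ℝ w (v2 (cos (2 * k * π / ((4 * n : ℕ) : ℝ)))
      (sin (2 * k * π / ((4 * n : ℕ) : ℝ)))) = ‖w‖ * cos (θ - 2 * j * a) := by
    rw [hang, Real.cos_sub_int_mul_two_pi, Real.sin_sub_int_mul_two_pi, Real.cos_sub]
    simp only [PiLp.inner_apply, Fin.sum_univ_two, v2_zero, v2_one, h0, h1,
      RCLike.inner_apply, conj_trivial]
    ring
  rw [hin]
  refine mul_le_mul_of_nonneg_left ?_ (norm_nonneg _)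
  rw [← Real.cos_abs (θ - 2 * j * a)]
  have hr := abs_sub_round (θ / (2 * a))
  rw [← hj] at hr
  have hle : |θ - 2 * j * a| ≤ a := by
    have : θ - 2 * j * a = (θ / (2 * a) - j) * (2 * a) := by field_simp
    rw [this, abs_mul, abs_of_pos (by positivity : 0 < 2 * a)]
    nlinarith
  exact Real.cos_le_cos_of_nonneg_of_le_pi (abs_nonneg _) (by nlinarith) hle

lemma isClosed_Hgon (m : ℕ) : IsClosed (Hgon m) := by
  refine Set.Finite.isClosed_convexHull ℝ ?_
  refine ((Set.finite_lt_nat m).image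
    (fun k : ℕ => v2 (cos (2 * k * π / m)) (sin (2 * k * π / m)))).subset ?_
  rintro _ ⟨k, hk, rfl⟩
  exact ⟨k, hk, rfl⟩

lemma closedBall_subset_Hgon (n : ℕ) (hn : 1 ≤ n) :
    Metric.closedBall (0 : E2) (cos (π / (4 * n))) ⊆ Hgon (4 * n) := by
  intro x hx
  by_contra hxH
  obtain ⟨f, u, hf, hu⟩ := geometric_hahn_banach_closed_point (convex_convexHull ℝ _)
    (isClosed_Hgon (4 * n)) hxH
  set w := (InnerProductSpace.toDual ℝ E2).symm f with hw
  have hfw (y : E2) : f y = inner ℝ w y := by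
    rw [hw, InnerProductSpace.toDual_symm_apply]
  obtain ⟨p, hp, hwp⟩ := exists_vertex n hn w
  have h1 := hf p hp
  rw [hfw] at h1 hu
  have h2 := real_inner_le_norm w x
  have h3 : ‖x‖ ≤ cos (π / (4 * n)) := by simpa using hx
  have h4 := mul_le_mul_of_nonneg_left h3 (norm_nonneg w)
  linarith

lemma covers_of_closedBall_subset {K : Set E2}
    (hK : Metric.closedBall (0 : E2) (Real.sqrt 2 / 2) ⊆ K) : CoversAnyPosition K := by
  intro Q x
  let z : E2 := v2 (round (x 0)) (round (x 1))
  refine ⟨z, ⟨Q.symm (z - x), hK ?_, by simp⟩, ?_⟩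
  · rw [mem_closedBall_zero_iff, LinearIsometryEquiv.norm_map]
    refine le_of_sq_le_sq ?_ (by positivity)
    rw [norm_sq_E2, div_pow, Real.sq_sqrt (by norm_num)]
    have h0 := abs_le.1 (abs_sub_round (x 0))
    have h1 := abs_le.1 (abs_sub_round (x 1))
    simp only [PiLp.sub_apply, z, v2_zero, v2_one]
    nlinarith
  · intro i
    fin_cases i
    · exact ⟨round (x 0), rfl⟩
    · exact ⟨round (x 1), rfl⟩

lemma not_covers_of_lt (n : ℕ) (hn : 1 ≤ n) (t : ℝ) (ht : 0 < t)
    (hlt : t * cos (π / (4 * n)) < Real.sqrt 2 / 2) :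
    ¬ CoversAnyPosition (t • Hgon (4 * n)) := by
  intro hcov
  set a : ℝ := π / (4 * n) with ha
  have hs : Real.sqrt 2 ^ 2 = 2 := Real.sq_sqrt (by norm_num)
  have hs0 : 0 < Real.sqrt 2 := by positivity
  -- the rotation by `π / 4 - a`, taking an edge normal of the polygon to the diagonal
  have hpq : ((cos a + sin a) * (Real.sqrt 2 / 2)) ^ 2
      + ((cos a - sin a) * (Real.sqrt 2 / 2)) ^ 2 = 1 := by
    linear_combination (Real.sqrt 2 ^ 2 / 2) * Real.sin_sq_add_cos_sq a + hs / 2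
  obtain ⟨z, ⟨y, ⟨h, hh, rfl⟩, rfl⟩, hz⟩ := hcov (rot _ _ hpq) (v2 (1 / 2) (1 / 2))
  obtain ⟨hA, hB⟩ := Hgon_subset_square n hn ha hh
  obtain ⟨m0, h0⟩ := hz 0
  obtain ⟨m1, h1⟩ := hz 1
  simp only [rot_apply, PiLp.add_apply, v2_zero, v2_one, PiLp.smul_apply, smul_eq_mul] at h0 h1
  have key (X : ℝ) (hX : |X| ≤ cos a) : |Real.sqrt 2 * (t * X)| < 1 := by
    rw [abs_mul, abs_mul, abs_of_pos hs0, abs_of_pos ht]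
    nlinarith [mul_le_mul_of_nonneg_left hX ht.le]
  have hA' : |((m0 + m1 - 1 : ℤ) : ℝ)| < 1 := by
    convert key _ hA using 2
    push_cast
    rw [← h0, ← h1]
    ring
  have hB' : |((m1 - m0 : ℤ) : ℝ)| < 1 := by
    convert key _ hB using 2
    push_cast
    rw [← h0, ← h1]
    ring
  have hA'' : |m0 + m1 - 1| < 1 := by exact_mod_cast hA'
  have hB'' : |m1 - m0| < 1 := by exact_mod_cast hB'
  rw [Int.abs_lt_one_iff] at hA'' hB''
  omega

/-- For the regular `4n`-gon, the following are equivalent: `t·H₄ₙ` contains a lattice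
point of `ℤ²` in any position; `t·H₄ₙ` contains the closed ball of radius `√2/2`;
`t ≥ (√2/2)/cos(π/(4n))`. -/
theorem regular4nGon_covering (n : ℕ) (hn : 1 ≤ n) (t : ℝ) (ht : 0 < t) :
    List.TFAE
      [ CoversAnyPosition (t • Hgon (4 * n)),
        Metric.closedBall (0 : E2) (Real.sqrt 2 / 2) ⊆ t • Hgon (4 * n),
        Real.sqrt 2 / 2 / cos (π / (4 * n)) ≤ t ] := by
  have hn1 : (1 : ℝ) ≤ n := by exact_mod_cast hn
  have hcos : 0 < cos (π / (4 * n)) := by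
    apply Real.cos_pos_of_mem_Ioo
    constructor
    · have : 0 < π / (4 * n) := by positivity
      linarith [Real.pi_pos]
    · rw [div_lt_div_iff₀ (by positivity) (by norm_num)]
      nlinarith [Real.pi_pos]
  tfae_have 1 → 3 := by
    intro h
    by_contra hlt
    rw [div_le_iff₀ hcos, not_le] at hlt
    exact not_covers_of_lt n hn t ht hlt h
  tfae_have 3 → 2 := by
    intro h x hx
    rw [div_le_iff₀ hcos] at h
    rw [Set.mem_smul_set_iff_inv_smul_mem₀ ht.ne']
    apply closedBall_subset_Hgon n hn
    rw [mem_closedBall_zero_iff] at hx ⊢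
    rw [norm_smul, norm_inv, Real.norm_of_nonneg ht.le, inv_mul_le_iff₀ ht]
    exact hx.trans h
  tfae_have 2 → 1 := covers_of_closedBall_subset
  tfae_finish
end
end
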